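/- arXiv:1505.05976 — 10 statements merged into one kernel-verified Lean document; each statement's English description precedes it below -/
import Mathlib

section
/- Let K be a subfield of ℂ, let f ∈ K[X] be an irreducible polynomial of degree n ≥ 3, and let x₁ ∈ ℂ be a root of f. Let B = [[a, b], [c, d]] be an invertible 2×2 matrix with entries in K such that c·x₁ + d ≠ 0 and (a·x₁ + b)/(c·x₁ + d) = x₁. Then B is a scalar multiple of the identity matrix; that is, c = 0, b = 0, and a = d. -/
section

open Polynomial

theorem eq_zero_of_aeval_eq_zero_of_natDegree_lt_irreducible {K A : Type*} [Field K] [Ring A]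
    [Nontrivial A] [Algebra K A] {f g : K[X]} {x : A} (hf : Irreducible f) (hfx : aeval x f = 0)
    (hgx : aeval x g = 0) (hdeg : g.natDegree < f.natDegree) : g = 0 :=
  eq_zero_of_dvd_of_natDegree_lt ((hf.dvd_iff_aeval_eq_zero hfx).mp hgx) hdeg

theorem quadratic_eq_zero_iff_coeffs_eq_zero {R : Type*} [Semiring R] {a b c : R} :
    C a * X ^ 2 + C b * X + C c = 0 ↔ a = 0 ∧ b = 0 ∧ c = 0 := by
  constructor
  · intro h
    have ha : a = 0 := by simpa using congr_arg (coeff · 2) h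
    have hb : b = 0 := by simpa using congr_arg (coeff · 1) h
    have hc : c = 0 := by simpa using congr_arg (coeff · 0) h
    exact ⟨ha, hb, hc⟩
  · rintro ⟨rfl, rfl, rfl⟩
    simp

theorem mobius_eq_self_iff_quadratic_eq_zero {L : Type*} [Field L] {a b c d x : L}
    (hden : c * x + d ≠ 0) :
    (a * x + b) / (c * x + d) = x ↔ c * x ^ 2 + (d - a) * x + -b = 0 := by
  rw [div_eq_iff hden, eq_comm, ← sub_eq_zero]
  ring_nf

theorem stmt0_general {K L : Type*} [Field K] [Field L] [Algebra K L] {f : K[X]}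
    (hf : Irreducible f) (hdeg : 3 ≤ f.natDegree) {x : L} (hx : aeval x f = 0) {a b c d : K}
    (hden : algebraMap K L c * x + algebraMap K L d ≠ 0)
    (hfix : (algebraMap K L a * x + algebraMap K L b) /
      (algebraMap K L c * x + algebraMap K L d) = x) :
    c = 0 ∧ b = 0 ∧ a = d := by
  have hroot : aeval x (C c * X ^ 2 + C (d - a) * X + C (-b)) = 0 := by
    simpa using (mobius_eq_self_iff_quadratic_eq_zero hden).mp hfix
  have hzero : C c * X ^ 2 + C (d - a) * X + C (-b) = 0 :=
    eq_zero_of_aeval_eq_zero_of_natDegree_lt_irreducible hf hx hroot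
      (natDegree_quadratic_le.trans_lt hdeg)
  obtain ⟨hc, hda, hb⟩ := quadratic_eq_zero_iff_coeffs_eq_zero.mp hzero
  exact ⟨hc, neg_eq_zero.mp hb, (sub_eq_zero.mp hda).symm⟩

end

/-- If `K` is a subfield of `ℂ`, `f ∈ K[X]` is irreducible of degree `n ≥ 3`
with root `x₁ ∈ ℂ`, and `B = [[a,b],[c,d]]` is an invertible matrix over `K` whose Möbius
transform fixes `x₁`, then `B` is a scalar matrix: `c = 0`, `b = 0` and `a = d`. -/
theorem stmt0 (K : Subfield ℂ) (f : Polynomial K) (hf : Irreducible f)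
    (hdeg : 3 ≤ f.natDegree) (x₁ : ℂ) (hx : Polynomial.aeval x₁ f = 0)
    (a b c d : K) (hinv : a * d - b * c ≠ 0)
    (hden : (c : ℂ) * x₁ + (d : ℂ) ≠ 0)
    (hfix : ((a : ℂ) * x₁ + (b : ℂ)) / ((c : ℂ) * x₁ + (d : ℂ)) = x₁) :
    c = 0 ∧ b = 0 ∧ a = d :=
  stmt0_general hf hdeg hx hden hfix
end

section
/- Let n ≥ 3 be a natural number and set N = n if n is odd and N = 2n if n is even. Let ζ ∈ ℂ be a primitive N-th root of unity and let r ∈ ℂ be nonzero. Let A be a 2×2 complex matrix with trace r(ζ + ζ⁻¹) and determinant r². Then A^n is a scalar matrix; precisely, A^n = rⁿζⁿ·I, where ζⁿ = 1 if n is odd and ζⁿ = −1 if n is even. -/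
/-!
By Cayley–Hamilton `(A - a)(A - b) = 0` with `a = rζ` and `b = rζ⁻¹`, so `A` acts on the image of
`A - a` as `b` and therefore `A ^ n = a ^ n + (∑ i < n, a ^ i b ^ (n - 1 - i)) (A - a)`.
The sum is `r ^ (n - 1)` times the same sum for `ζ` and `ζ⁻¹`, which vanishes because
`ζ ≠ ζ⁻¹` have the same `n`-th power.
-/

open Finset

theorem pow_eq_smul_one_add_geom_sum₂_smul {R M : Type*} [CommRing R] [Ring M] [Algebra R M]
    {x : M} {a b : R} (hx : (x - a • 1) * (x - b • 1) = 0) (n : ℕ) :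
    x ^ n = a ^ n • 1 + (∑ i ∈ range n, a ^ i * b ^ (n - 1 - i)) • (x - a • 1) := by
  have sub_mul_self : (x - a • 1) * x = b • (x - a • 1) := by
    rwa [mul_sub, mul_smul_comm, mul_one, sub_eq_zero] at hx
  induction n with
  | zero => simp
  | succ n ih =>
    rw [pow_succ, ih, add_mul, smul_mul_assoc, smul_mul_assoc, sub_mul_self, one_mul,
      Nat.add_sub_cancel, geom_sum₂_succ_eq]
    module

theorem sub_smul_one_mul_sub_smul_one_eq_zero {R : Type*} [CommRing R]
    {A : Matrix (Fin 2) (Fin 2) R} {a b : R} (htr : A.trace = a + b) (hdet : A.det = a * b) :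
    (A - a • 1) * (A - b • 1) = 0 := by
  nontriviality R
  have cayley_hamilton : A ^ 2 - (a + b) • A + (a * b) • 1 = 0 := by
    simpa [Matrix.charpoly_fin_two, htr, hdet, Algebra.smul_def] using A.aeval_self_charpoly
  rw [← cayley_hamilton, sub_mul, mul_sub, mul_sub, sq]
  simp only [smul_mul_assoc, mul_smul_comm, one_mul, mul_one]
  module

theorem geom_sum₂_mul_left_eq_zero {R : Type*} [CommRing R] [IsDomain R] {x y : R} {n : ℕ}
    (hne : x ≠ y) (hpow : x ^ n = y ^ n) (r : R) :
    ∑ i ∈ range n, (r * x) ^ i * (r * y) ^ (n - 1 - i) = 0 := by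
  have geom_sum_eq_zero : ∑ i ∈ range n, x ^ i * y ^ (n - 1 - i) = 0 := by
    have telescope := geom_sum₂_mul x y n
    rw [hpow, sub_self] at telescope
    exact (mul_eq_zero.mp telescope).resolve_right (sub_ne_zero.mpr hne)
  calc ∑ i ∈ range n, (r * x) ^ i * (r * y) ^ (n - 1 - i)
      = ∑ i ∈ range n, r ^ (n - 1) * (x ^ i * y ^ (n - 1 - i)) := by
        refine sum_congr rfl fun i hi => ?_
        have exponent : n - 1 = i + (n - 1 - i) := by grind
        rw [mul_pow, mul_pow, mul_mul_mul_comm, ← pow_add, ← exponent]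
    _ = 0 := by rw [← mul_sum, geom_sum_eq_zero, mul_zero]

theorem pow_eq_smul_one_of_trace_of_det {R : Type*} [CommRing R] [IsDomain R]
    {A : Matrix (Fin 2) (Fin 2) R} {r x y : R} {n : ℕ} (htr : A.trace = r * x + r * y)
    (hdet : A.det = r * x * (r * y)) (hne : x ≠ y) (hpow : x ^ n = y ^ n) :
    A ^ n = (r ^ n * x ^ n) • 1 := by
  rw [pow_eq_smul_one_add_geom_sum₂_smul (sub_smul_one_mul_sub_smul_one_eq_zero htr hdet),
    geom_sum₂_mul_left_eq_zero hne hpow, zero_smul, add_zero, mul_pow]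

theorem stmt1_general {K : Type*} [Field K] {n : ℕ} (hn : 2 ≤ n) {ζ : K}
    (hζ : IsPrimitiveRoot ζ (if Odd n then n else 2 * n)) {r : K}
    {A : Matrix (Fin 2) (Fin 2) K} (htr : A.trace = r * (ζ + ζ⁻¹)) (hdet : A.det = r ^ 2) :
    A ^ n = (r ^ n * ζ ^ n) • (1 : Matrix (Fin 2) (Fin 2) K) ∧
      (Odd n → ζ ^ n = 1) ∧ (¬ Odd n → ζ ^ n = -1) := by
  have pow_of_odd (h : Odd n) : ζ ^ n = 1 := by
    rw [if_pos h] at hζ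
    exact hζ.pow_eq_one
  have pow_of_not_odd (h : ¬ Odd n) : ζ ^ n = -1 := by
    rw [if_neg h] at hζ
    exact (hζ.pow (by lia) (mul_comm 2 n)).eq_neg_one_of_two_right
  have order_gt_two : 2 < if Odd n then n else 2 * n := by grind
  have ζ_ne_zero : ζ ≠ 0 := hζ.ne_zero (by lia)
  have ζ_ne_inv : ζ ≠ ζ⁻¹ := fun h =>
    hζ.pow_ne_one_of_pos_of_lt two_ne_zero order_gt_two
      (by rwa [sq, mul_eq_one_iff_eq_inv₀ ζ_ne_zero])
  have pow_eq_inv_pow : ζ ^ n = ζ⁻¹ ^ n := by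
    by_cases h : Odd n
    · rw [inv_pow, pow_of_odd h, inv_one]
    · rw [inv_pow, pow_of_not_odd h, inv_neg_one]
  exact ⟨pow_eq_smul_one_of_trace_of_det (by rw [htr, mul_add]) (by rw [hdet]; field_simp)
    ζ_ne_inv pow_eq_inv_pow, pow_of_odd, pow_of_not_odd⟩

/-- Let `n ≥ 3`, `N = n` if `n` odd and `N = 2n` if `n` even, `ζ` a primitive
`N`-th root of unity, `r ≠ 0`, and `A` a `2×2` complex matrix of trace `r(ζ + ζ⁻¹)` and
determinant `r²`.  Then `A ^ n = rⁿζⁿ • I`, where `ζⁿ = 1` for `n` odd and `ζⁿ = -1` for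
`n` even. -/
theorem stmt1 (n : ℕ) (hn : 3 ≤ n) (N : ℕ) (hN : N = if Odd n then n else 2 * n)
    (ζ : ℂ) (hζ : IsPrimitiveRoot ζ N) (r : ℂ) (hr : r ≠ 0)
    (A : Matrix (Fin 2) (Fin 2) ℂ)
    (htr : A.trace = r * (ζ + ζ⁻¹)) (hdet : A.det = r ^ 2) :
    A ^ n = (r ^ n * ζ ^ n) • (1 : Matrix (Fin 2) (Fin 2) ℂ) ∧
      (Odd n → ζ ^ n = 1) ∧ (¬ Odd n → ζ ^ n = -1) := by
  subst hN
  exact stmt1_general (by lia) hζ htr hdet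
end

section
/- Let n ≥ 3 be a natural number and set N = n if n is odd and N = 2n if n is even. Let ζ ∈ ℂ be a primitive N-th root of unity and let r ∈ ℂ be nonzero. Let A be a 2×2 complex matrix with trace r(ζ + ζ⁻¹) and determinant r². Then for every integer l with 1 ≤ l ≤ n − 1, the matrix A^l is not a scalar multiple of the identity matrix. -/
/-!
The trace and determinant say that the eigenvalues of `A` are `r * ζ` and `r * ζ⁻¹`. If `A ^ l` is
scalar, then their `l`-th powers coincide, so `ζ ^ (2 * l) = 1` and `N ∣ 2 * l`. By the choice of
`N` this means `n ∣ l`, which is impossible for `0 < l < n`.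
-/

theorem pow_eq_of_mem_spectrum_of_pow_eq_algebraMap {K R : Type*} [Field K] [Ring R] [Algebra K R]
    {a : R} {μ t : K} {l : ℕ} (hμ : μ ∈ spectrum K a) (ha : a ^ l = algebraMap K R t) :
    μ ^ l = t := by
  have hpow : μ ^ l ∈ spectrum K (algebraMap K R t) := ha ▸ spectrum.pow_mem_pow a l hμ
  by_contra hne
  rw [spectrum.mem_iff, ← map_sub] at hpow
  exact hpow ((sub_ne_zero.mpr hne).isUnit.map (algebraMap K R))

theorem ite_odd_dvd_two_mul_iff (n l : ℕ) : (if Odd n then n else 2 * n) ∣ 2 * l ↔ n ∣ l := by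
  split_ifs with hodd
  · exact (Nat.coprime_two_right.mpr hodd).dvd_mul_left
  · exact Nat.mul_dvd_mul_iff_left two_pos

section Field

variable {K : Type*} [Field K] {A : Matrix (Fin 2) (Fin 2) K}

theorem spectrum_eq_pair_of_trace_of_det {x y : K} (htr : A.trace = x + y) (hdet : A.det = x * y) :
    spectrum K A = {x, y} := by
  ext μ
  have hfactor : A.charpoly.eval μ = (μ - x) * (μ - y) := by
    simp only [Matrix.charpoly_fin_two, htr, hdet, Polynomial.eval_add, Polynomial.eval_sub,
      Polynomial.eval_mul, Polynomial.eval_pow, Polynomial.eval_X, Polynomial.eval_C]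
    ring
  rw [Matrix.mem_spectrum_iff_isRoot_charpoly, Polynomial.IsRoot.def, hfactor, mul_eq_zero,
    sub_eq_zero, sub_eq_zero, Set.mem_insert_iff, Set.mem_singleton_iff]

theorem pow_two_mul_eq_one_of_pow_eq_smul_one {ζ r t : K} {l : ℕ} (hζ : ζ ≠ 0) (hr : r ≠ 0)
    (htr : A.trace = r * (ζ + ζ⁻¹)) (hdet : A.det = r ^ 2) (hA : A ^ l = t • 1) :
    ζ ^ (2 * l) = 1 := by
  have hspec : spectrum K A = {r * ζ, r * ζ⁻¹} :=
    spectrum_eq_pair_of_trace_of_det (by rw [htr, mul_add]) (by rw [hdet]; field_simp)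
  have hpow {μ : K} (hμ : μ ∈ spectrum K A) : μ ^ l = t :=
    pow_eq_of_mem_spectrum_of_pow_eq_algebraMap hμ (by rw [hA, Algebra.algebraMap_eq_smul_one])
  have heq : (r * ζ) ^ l = (r * ζ⁻¹) ^ l :=
    (hpow (by simp [hspec])).trans (hpow (by simp [hspec])).symm
  have hinv : ζ ^ l = (ζ ^ l)⁻¹ := by
    rw [mul_pow, mul_pow, inv_pow] at heq
    exact mul_left_cancel₀ (pow_ne_zero l hr) heq
  calc ζ ^ (2 * l) = ζ ^ l * ζ ^ l := by rw [two_mul, pow_add]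
    _ = ζ ^ l * (ζ ^ l)⁻¹ := by rw [← hinv]
    _ = 1 := mul_inv_cancel₀ (pow_ne_zero l hζ)

theorem stmt2_general {n l : ℕ} {ζ r : K} (hζ : IsPrimitiveRoot ζ (if Odd n then n else 2 * n))
    (hr : r ≠ 0) (htr : A.trace = r * (ζ + ζ⁻¹)) (hdet : A.det = r ^ 2) (hl : 0 < l)
    (hln : l < n) (t : K) : A ^ l ≠ t • 1 := by
  intro hA
  have hζ₀ : ζ ≠ 0 := hζ.ne_zero (by split_ifs <;> omega)
  have hdvd : n ∣ l := (ite_odd_dvd_two_mul_iff n l).mp <|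
    hζ.dvd_of_pow_eq_one _ (pow_two_mul_eq_one_of_pow_eq_smul_one hζ₀ hr htr hdet hA)
  exact Nat.not_dvd_of_pos_of_lt hl hln hdvd

end Field

/-- With `n, N, ζ, r, A` as in Statement 1, for every `l` with
`1 ≤ l ≤ n - 1` the matrix `A ^ l` is not a scalar multiple of the identity. -/
theorem stmt2 (n : ℕ) (hn : 3 ≤ n) (N : ℕ) (hN : N = if Odd n then n else 2 * n)
    (ζ : ℂ) (hζ : IsPrimitiveRoot ζ N) (r : ℂ) (hr : r ≠ 0)
    (A : Matrix (Fin 2) (Fin 2) ℂ)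
    (htr : A.trace = r * (ζ + ζ⁻¹)) (hdet : A.det = r ^ 2) :
    ∀ l : ℕ, 1 ≤ l → l ≤ n - 1 → ∀ t : ℂ, A ^ l ≠ t • (1 : Matrix (Fin 2) (Fin 2) ℂ) :=
  fun _ hl hln => stmt2_general (hN ▸ hζ) hr htr hdet hl (by omega)
end

section
/- Let K be a subfield of ℂ, let A = [[a, b], [c, d]] be an invertible 2×2 matrix over K, n ≥ 3, and C ∈ K. In the field K(X) of rational functions over K, let F = X + A∘X + A²∘X + ⋯ + A^{n−1}∘X + C, and write F = f₁/f₂ with f₁, f₂ ∈ K[X] coprime. Let x₁ ∈ ℂ satisfy f₁(x₁) = 0, suppose the Möbius transforms A^j∘x₁ are defined for j = 1, …, n (all denominators nonzero), and suppose A^n∘x₁ = x₁. Then f₁(A∘x₁) = 0. -/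
/-!
Where all the denominators involved are nonzero, `F(A∘x) - F(x)` telescopes to `Aⁿ∘x - x`, so `F`
takes the same value at `x₁` and at `A∘x₁`. Since `F` is regular at both points, its zeros there are
exactly the zeros of its numerator `f₁`.
-/

open Polynomial

-- `RatFunc.eval` needs both fields in the same universe.
universe u

section Mobius

variable {k : Type*} [Field k]

/-- The denominator `s z + t` of the Möbius transform of `z` by `[[p, q], [s, t]]`. -/
def mobiusDenom (M : Matrix (Fin 2) (Fin 2) k) (z : k) : k :=
  M 1 0 * z + M 1 1

/-- The Möbius transform `M∘z = (p z + q) / (s z + t)` of `z` by a not necessarily invertible matrix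
`M = [[p, q], [s, t]]`; it has the junk value `0` where `mobiusDenom M z = 0`. -/
def mobius (M : Matrix (Fin 2) (Fin 2) k) (z : k) : k :=
  (M 0 0 * z + M 0 1) / mobiusDenom M z

@[simp]
theorem mobiusDenom_one (z : k) : mobiusDenom 1 z = 1 := by
  simp [mobiusDenom]

@[simp]
theorem mobius_one (z : k) : mobius 1 z = z := by
  simp [mobius]

theorem mobiusDenom_mobius (M : Matrix (Fin 2) (Fin 2) k) {N : Matrix (Fin 2) (Fin 2) k} {z : k}
    (hz : mobiusDenom N z ≠ 0) :
    mobiusDenom M (mobius N z) = mobiusDenom (M * N) z / mobiusDenom N z := by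
  rw [eq_div_iff hz, mobiusDenom, mobius, add_mul, mul_assoc, div_mul_cancel₀ _ hz]
  simp only [mobiusDenom, Matrix.mul_apply, Fin.sum_univ_two]
  ring

theorem mobius_mobius (M : Matrix (Fin 2) (Fin 2) k) {N : Matrix (Fin 2) (Fin 2) k} {z : k}
    (hz : mobiusDenom N z ≠ 0) : mobius M (mobius N z) = mobius (M * N) z := by
  have num_mobius : M 0 0 * mobius N z + M 0 1 =
      ((M * N) 0 0 * z + (M * N) 0 1) / mobiusDenom N z := by
    rw [eq_div_iff hz, mobius, add_mul, mul_assoc, div_mul_cancel₀ _ hz]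
    simp only [mobiusDenom, Matrix.mul_apply, Fin.sum_univ_two]
    ring
  rw [mobius, num_mobius, mobiusDenom_mobius M hz, div_div_div_cancel_right₀ hz, mobius]

theorem mobiusDenom_pow_mobius_ne_zero {M : Matrix (Fin 2) (Fin 2) k} {z : k} {j : ℕ}
    (hz : mobiusDenom M z ≠ 0) (hj : mobiusDenom (M ^ (j + 1)) z ≠ 0) :
    mobiusDenom (M ^ j) (mobius M z) ≠ 0 := by
  rw [mobiusDenom_mobius _ hz, ← pow_succ]
  exact div_ne_zero hj hz

theorem sum_mobius_pow_mobius {M : Matrix (Fin 2) (Fin 2) k} {z : k} {n : ℕ}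
    (hz : mobiusDenom M z ≠ 0) (hfix : mobius (M ^ n) z = z) :
    ∑ j ∈ Finset.range n, mobius (M ^ j) (mobius M z) =
      ∑ j ∈ Finset.range n, mobius (M ^ j) z := by
  have shift : ∑ j ∈ Finset.range n, mobius (M ^ (j + 1)) z + mobius (M ^ 0) z =
      ∑ j ∈ Finset.range n, mobius (M ^ j) z + mobius (M ^ n) z := by
    rw [← Finset.sum_range_succ, ← Finset.sum_range_succ' (fun j ↦ mobius (M ^ j) z)]
  simp only [mobius_mobius _ hz, ← pow_succ]
  simpa only [pow_zero, mobius_one, hfix, add_left_inj] using shift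

end Mobius

section Evaluation

variable {K L : Type u} [Field K] [Field L] {φ : K →+* L} {z : L}

/-- The rational function `r` over `K` has no pole at the point `z` of an extension `φ : K →+* L`,
that is, its reduced denominator does not vanish at `z`. -/
def IsRegularAt (φ : K →+* L) (z : L) (r : RatFunc K) : Prop :=
  r.denom.eval₂ φ z ≠ 0

theorem IsRegularAt.C (c : K) : IsRegularAt φ z (RatFunc.C c) := by
  simp [IsRegularAt]

theorem IsRegularAt.add {r s : RatFunc K} (hr : IsRegularAt φ z r) (hs : IsRegularAt φ z s) :
    IsRegularAt φ z (r + s) := fun h ↦ by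
  have h_mul := eval₂_eq_zero_of_dvd_of_eval₂_eq_zero φ z (RatFunc.denom_add_dvd r s) h
  rw [eval₂_mul] at h_mul
  exact mul_ne_zero hr hs h_mul

theorem IsRegularAt.sum {ι : Type*} {s : Finset ι} {r : ι → RatFunc K}
    (hr : ∀ i ∈ s, IsRegularAt φ z (r i)) : IsRegularAt φ z (∑ i ∈ s, r i) :=
  Finset.sum_induction r _ (fun _ _ ↦ .add) (by simp [IsRegularAt]) hr

theorem IsRegularAt.eval_sum {ι : Type*} {s : Finset ι} {r : ι → RatFunc K}
    (hr : ∀ i ∈ s, IsRegularAt φ z (r i)) :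
    (∑ i ∈ s, r i).eval φ z = ∑ i ∈ s, (r i).eval φ z := by
  induction s using Finset.cons_induction with
  | empty => simp
  | cons i s hi ih =>
    obtain ⟨hri, hrs⟩ := (Finset.forall_mem_cons hi _).1 hr
    rw [Finset.sum_cons, Finset.sum_cons, RatFunc.eval_add φ z hri (IsRegularAt.sum hrs), ih hrs]

theorem IsRegularAt.div {p q : K[X]} (hq : q.eval₂ φ z ≠ 0) :
    IsRegularAt φ z (algebraMap K[X] (RatFunc K) p / algebraMap K[X] (RatFunc K) q) :=
  mt (eval₂_eq_zero_of_dvd_of_eval₂_eq_zero φ z (RatFunc.denom_div_dvd p q)) hq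

theorem IsRegularAt.eval_mul_eval₂ {r : RatFunc K} {p q : K[X]} (hreg : IsRegularAt φ z r)
    (hq : q ≠ 0) (hr : r = algebraMap K[X] (RatFunc K) p / algebraMap K[X] (RatFunc K) q) :
    r.eval φ z * q.eval₂ φ z = p.eval₂ φ z := by
  have cross_mul := congrArg (eval₂ φ z) ((RatFunc.num_mul_eq_mul_denom_iff hq).2 hr)
  rw [eval₂_mul, eval₂_mul] at cross_mul
  rw [RatFunc.eval, div_mul_eq_mul_div, cross_mul, mul_div_cancel_right₀ _ hreg]

theorem eval_algebraMap_div_algebraMap {p q : K[X]} (hq : q.eval₂ φ z ≠ 0) :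
    RatFunc.eval φ z (algebraMap K[X] (RatFunc K) p / algebraMap K[X] (RatFunc K) q) =
      p.eval₂ φ z / q.eval₂ φ z :=
  eq_div_of_mul_eq hq <|
    (IsRegularAt.div hq).eval_mul_eval₂ (ne_zero_of_map (f := eval₂RingHom φ z) hq) rfl

end Evaluation

section MobiusSum

variable {K L : Type u} [Field K] [Field L] {φ : K →+* L} {z : L}

/-- The rational function `X + A∘X + ⋯ + Aⁿ⁻¹∘X + C`. -/
noncomputable def mobiusSum (A : Matrix (Fin 2) (Fin 2) K) (n : ℕ) (C : K) : RatFunc K :=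
  ∑ j ∈ Finset.range n, mobius ((A ^ j).map RatFunc.C) RatFunc.X + RatFunc.C C

theorem mobius_map_C_X (A : Matrix (Fin 2) (Fin 2) K) :
    mobius (A.map RatFunc.C) RatFunc.X =
      algebraMap K[X] (RatFunc K) (C (A 0 0) * X + C (A 0 1)) /
        algebraMap K[X] (RatFunc K) (C (A 1 0) * X + C (A 1 1)) := by
  simp [mobius, mobiusDenom]

theorem eval₂_linear_eq_mobiusDenom (φ : K →+* L) (z : L) (A : Matrix (Fin 2) (Fin 2) K) :
    (C (A 1 0) * X + C (A 1 1)).eval₂ φ z = mobiusDenom (A.map φ) z := by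
  simp [mobiusDenom]

theorem isRegularAt_mobius {A : Matrix (Fin 2) (Fin 2) K} (hz : mobiusDenom (A.map φ) z ≠ 0) :
    IsRegularAt φ z (mobius (A.map RatFunc.C) RatFunc.X) := by
  rw [mobius_map_C_X]
  exact .div (by rwa [eval₂_linear_eq_mobiusDenom])

theorem eval_mobius {A : Matrix (Fin 2) (Fin 2) K} (hz : mobiusDenom (A.map φ) z ≠ 0) :
    (mobius (A.map RatFunc.C) RatFunc.X).eval φ z = mobius (A.map φ) z := by
  rw [← eval₂_linear_eq_mobiusDenom] at hz
  rw [mobius_map_C_X, eval_algebraMap_div_algebraMap hz, eval₂_linear_eq_mobiusDenom]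
  simp [mobius]

variable {A : Matrix (Fin 2) (Fin 2) K} {n : ℕ}

theorem isRegularAt_mobiusSum (C : K) (hz : ∀ j < n, mobiusDenom (A.map φ ^ j) z ≠ 0) :
    IsRegularAt φ z (mobiusSum A n C) :=
  .add (.sum fun j hj ↦ isRegularAt_mobius <| by
    rw [Matrix.map_pow]
    exact hz j (Finset.mem_range.1 hj)) (.C C)

theorem eval_mobiusSum (C : K) (hz : ∀ j < n, mobiusDenom (A.map φ ^ j) z ≠ 0) :
    (mobiusSum A n C).eval φ z = ∑ j ∈ Finset.range n, mobius (A.map φ ^ j) z + φ C := by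
  have hz' : ∀ j ∈ Finset.range n, mobiusDenom ((A ^ j).map φ) z ≠ 0 := fun j hj ↦ by
    rw [Matrix.map_pow]
    exact hz j (Finset.mem_range.1 hj)
  have hreg := fun j hj ↦ isRegularAt_mobius (hz' j hj)
  rw [mobiusSum, RatFunc.eval_add φ z (IsRegularAt.sum hreg) (IsRegularAt.C C), RatFunc.eval_C,
    IsRegularAt.eval_sum hreg]
  refine congrArg (· + φ C) (Finset.sum_congr rfl fun j hj ↦ ?_)
  rw [eval_mobius (hz' j hj), Matrix.map_pow]

end MobiusSum

theorem stmt4_general {K L : Type u} [Field K] [Field L] [Algebra K L]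
    {A : Matrix (Fin 2) (Fin 2) K} {n : ℕ} (hn : n ≠ 0) {C : K} {f₁ f₂ : K[X]}
    (hcop : IsCoprime f₁ f₂)
    (hquot : mobiusSum A n C = algebraMap K[X] (RatFunc K) f₁ / algebraMap K[X] (RatFunc K) f₂)
    {x : L} (hx : aeval x f₁ = 0)
    (hden : ∀ j : ℕ, 1 ≤ j → j ≤ n → mobiusDenom (A.map (algebraMap K L) ^ j) x ≠ 0)
    (hfix : mobius (A.map (algebraMap K L) ^ n) x = x) :
    aeval (mobius (A.map (algebraMap K L)) x) f₁ = 0 := by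
  set M := A.map (algebraMap K L)
  have hden_one : mobiusDenom M x ≠ 0 := by
    simpa only [pow_one] using hden 1 le_rfl (Nat.one_le_iff_ne_zero.2 hn)
  have hden_x : ∀ j < n, mobiusDenom (M ^ j) x ≠ 0 := fun j hj ↦ by
    rcases j.eq_zero_or_pos with rfl | hpos
    · simp
    · exact hden j hpos hj.le
  have hden_Mx : ∀ j < n, mobiusDenom (M ^ j) (mobius M x) ≠ 0 := fun j hj ↦
    mobiusDenom_pow_mobius_ne_zero hden_one (hden (j + 1) j.succ_pos hj)
  have hf₂_x : aeval x f₂ ≠ 0 := (aeval_ne_zero_of_isCoprime hcop x).resolve_left (not_not.2 hx)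
  rw [aeval_def] at hx hf₂_x
  have eval_x : (mobiusSum A n C).eval (algebraMap K L) x = 0 := by
    rw [hquot, eval_algebraMap_div_algebraMap hf₂_x, hx, zero_div]
  have eval_Mx : (mobiusSum A n C).eval (algebraMap K L) (mobius M x) = 0 := by
    rw [eval_mobiusSum C hden_Mx, sum_mobius_pow_mobius hden_one hfix, ← eval_mobiusSum C hden_x,
      eval_x]
  have hf₂ : f₂ ≠ 0 := ne_zero_of_map (f := aeval x) hf₂_x
  rw [aeval_def, ← (isRegularAt_mobiusSum C hden_Mx).eval_mul_eval₂ hf₂ hquot, eval_Mx, zero_mul]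

/-- Let `K ⊆ ℂ`, `A = [[a,b],[c,d]]` invertible over `K`, `n ≥ 3`, `C ∈ K`.
Let `F = X + A∘X + ⋯ + A^{n-1}∘X + C` in `K(X)`, written `F = f₁/f₂` with `f₁, f₂` coprime.
If `x₁` is a root of `f₁`, the Möbius transforms `A^j ∘ x₁` are defined for `j = 1, …, n`,
and `Aⁿ ∘ x₁ = x₁`, then `A ∘ x₁` is also a root of `f₁`. -/
theorem stmt4 (K : Subfield ℂ) (a b c d : K) (hinv : a * d - b * c ≠ 0)
    (n : ℕ) (hn : 3 ≤ n) (C : K)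
    (A : Matrix (Fin 2) (Fin 2) K) (hA : A = !![a, b; c, d])
    (F : RatFunc K)
    (hF : F = (∑ j ∈ Finset.range n,
        (RatFunc.C ((A ^ j) 0 0) * RatFunc.X + RatFunc.C ((A ^ j) 0 1)) /
          (RatFunc.C ((A ^ j) 1 0) * RatFunc.X + RatFunc.C ((A ^ j) 1 1))) + RatFunc.C C)
    (f₁ f₂ : Polynomial K) (hcop : IsCoprime f₁ f₂)
    (hquot : F = algebraMap (Polynomial K) (RatFunc K) f₁ /
        algebraMap (Polynomial K) (RatFunc K) f₂)
    (x₁ : ℂ) (hx₁ : Polynomial.aeval x₁ f₁ = 0)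
    (M : Matrix (Fin 2) (Fin 2) ℂ) (hM : M = !![(a : ℂ), (b : ℂ); (c : ℂ), (d : ℂ)])
    (hden : ∀ j : ℕ, 1 ≤ j → j ≤ n → (M ^ j) 1 0 * x₁ + (M ^ j) 1 1 ≠ 0)
    (hfix : ((M ^ n) 0 0 * x₁ + (M ^ n) 0 1) / ((M ^ n) 1 0 * x₁ + (M ^ n) 1 1) = x₁) :
    Polynomial.aeval (((a : ℂ) * x₁ + (b : ℂ)) / ((c : ℂ) * x₁ + (d : ℂ))) f₁ = 0 := by
  subst hA
  obtain rfl : M = !![a, b; c, d].map (algebraMap K ℂ) :=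
    hM.trans (Matrix.eta_fin_two (!![a, b; c, d].map (algebraMap K ℂ))).symm
  exact stmt4_general (by lia) hcop (hF.symm.trans hquot) hx₁ hden hfix
end

section
/- Let K be a field, A = [[a, b], [c, d]] an invertible 2×2 matrix over K, n ≥ 1, and C ∈ K. In the rational function field K(X), let F = X + A∘X + A²∘X + ⋯ + A^{n−1}∘X + C and write F = f₁/f₂ with f₁, f₂ ∈ K[X] coprime. Then the degree of f₁ is at most n. -/
/-!
The height of a rational function, i.e. the larger of the degrees of its numerator and denominator
in lowest terms, is subadditive: adding two fractions over the product of their denominators gives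
numerator and denominator of degree at most the sum of the heights, and cancellation can only lower
these degrees. A Möbius transform of `X` has height at most `1` and a constant has height `0`, so a
sum of `n` Möbius transforms and a constant has height at most `n`.
-/

open Polynomial

section

variable {K : Type*} [Field K]

/-- The height of a rational function: the larger of the degrees of its numerator and denominator
in lowest terms. For nonconstant `f` this is the degree of `K(X)` over `K(f)`; constants,
including `0 = 0 / 1`, have height `0`. -/
noncomputable def ratFuncHeight (f : RatFunc K) : ℕ :=
  max f.num.natDegree f.denom.natDegree

@[simp]
lemma ratFuncHeight_C (x : K) : ratFuncHeight (RatFunc.C x) = 0 := by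
  simp [ratFuncHeight]

lemma ratFuncHeight_div_le (p : K[X]) {q : K[X]} (hq : q ≠ 0) :
    ratFuncHeight (algebraMap K[X] (RatFunc K) p / algebraMap K[X] (RatFunc K) q) ≤
      max p.natDegree q.natDegree := by
  rcases eq_or_ne p 0 with rfl | hp
  · simp [ratFuncHeight]
  · exact max_le_max (natDegree_le_of_dvd (RatFunc.num_div_dvd p hq) hp)
      (natDegree_le_of_dvd (RatFunc.denom_div_dvd p q) hq)

lemma ratFuncHeight_div_of_isCoprime {p q : K[X]} (hpq : IsCoprime p q) :
    ratFuncHeight (algebraMap K[X] (RatFunc K) p / algebraMap K[X] (RatFunc K) q) =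
      max p.natDegree q.natDegree := by
  rcases eq_or_ne q 0 with rfl | hq
  · simp [ratFuncHeight, natDegree_eq_zero_of_isUnit (isCoprime_zero_right.mp hpq)]
  have hcross := (RatFunc.num_mul_eq_mul_denom_iff (p := p) hq).mpr rfl
  have hnum := associated_of_dvd_dvd (RatFunc.num_div_dvd p hq)
    (hpq.dvd_of_dvd_mul_right (Dvd.intro _ hcross.symm))
  have hdenom := associated_of_dvd_dvd (RatFunc.denom_div_dvd p q)
    (hpq.symm.dvd_of_dvd_mul_left (Dvd.intro_left _ hcross))
  rw [ratFuncHeight, natDegree_eq_of_degree_eq (degree_eq_degree_of_associated hnum),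
    natDegree_eq_of_degree_eq (degree_eq_degree_of_associated hdenom)]

lemma ratFuncHeight_add_le (f g : RatFunc K) :
    ratFuncHeight (f + g) ≤ ratFuncHeight f + ratFuncHeight g := by
  have hsum : f + g = algebraMap K[X] (RatFunc K) (f.num * g.denom + f.denom * g.num) /
      algebraMap K[X] (RatFunc K) (f.denom * g.denom) :=
    (RatFunc.num_mul_eq_mul_denom_iff (mul_ne_zero f.denom_ne_zero g.denom_ne_zero)).mp
      (RatFunc.num_denom_add f g)
  have hfn : f.num.natDegree ≤ ratFuncHeight f := le_max_left _ _
  have hfd : f.denom.natDegree ≤ ratFuncHeight f := le_max_right _ _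
  have hgn : g.num.natDegree ≤ ratFuncHeight g := le_max_left _ _
  have hgd : g.denom.natDegree ≤ ratFuncHeight g := le_max_right _ _
  rw [hsum]
  exact (ratFuncHeight_div_le _ (mul_ne_zero f.denom_ne_zero g.denom_ne_zero)).trans <|
    max_le (natDegree_add_le_of_degree_le (natDegree_mul_le_of_le hfn hgd)
      (natDegree_mul_le_of_le hfd hgn)) (natDegree_mul_le_of_le hfd hgd)

lemma ratFuncHeight_sum_le {ι : Type*} (s : Finset ι) (f : ι → RatFunc K) :
    ratFuncHeight (∑ i ∈ s, f i) ≤ ∑ i ∈ s, ratFuncHeight (f i) :=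
  Finset.le_sum_of_subadditive _ (by simp [ratFuncHeight]) ratFuncHeight_add_le s f

/-- The Möbius transform `M∘X = (p X + q) / (s X + t)` of the variable by `M = [[p, q], [s, t]]`.
It takes the junk value `0` when the bottom row of `M` vanishes. -/
noncomputable def moebiusX (M : Matrix (Fin 2) (Fin 2) K) : RatFunc K :=
  (RatFunc.C (M 0 0) * RatFunc.X + RatFunc.C (M 0 1)) /
    (RatFunc.C (M 1 0) * RatFunc.X + RatFunc.C (M 1 1))

lemma ratFuncHeight_moebiusX_le_one {M : Matrix (Fin 2) (Fin 2) K} (hM : M 1 ≠ 0) :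
    ratFuncHeight (moebiusX M) ≤ 1 := by
  have hlin (x y : K) : RatFunc.C x * RatFunc.X + RatFunc.C y =
      algebraMap K[X] (RatFunc K) (C x * X + C y) := by simp
  have hdenom : C (M 1 0) * X + C (M 1 1) ≠ 0 := by
    contrapose! hM
    ext j
    fin_cases j
    · simpa using congrArg (coeff · 1) hM
    · simpa using congrArg (coeff · 0) hM
  rw [moebiusX, hlin, hlin]
  exact (ratFuncHeight_div_le _ hdenom).trans (max_le natDegree_linear_le natDegree_linear_le)

end

lemma row_pow_ne_zero_of_det_ne_zero {m R : Type*} [Fintype m] [DecidableEq m] [CommRing R]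
    [IsReduced R] {M : Matrix m m R} (hM : M.det ≠ 0) (j : ℕ) (i : m) : (M ^ j) i ≠ 0 := by
  intro hrow
  have hdet : (M ^ j).det = 0 := Matrix.det_eq_zero_of_row_eq_zero i (congrFun hrow)
  exact pow_ne_zero j hM (Matrix.det_pow M j ▸ hdet)

theorem stmt6_general {K ι : Type*} [Field K] (s : Finset ι)
    (M : ι → Matrix (Fin 2) (Fin 2) K) (hM : ∀ i ∈ s, M i 1 ≠ 0) (c : K)
    {f₁ f₂ : K[X]} (hcop : IsCoprime f₁ f₂)
    (hquot : ∑ i ∈ s, moebiusX (M i) + RatFunc.C c =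
      algebraMap K[X] (RatFunc K) f₁ / algebraMap K[X] (RatFunc K) f₂) :
    max f₁.natDegree f₂.natDegree ≤ s.card :=
  calc max f₁.natDegree f₂.natDegree
      = ratFuncHeight (∑ i ∈ s, moebiusX (M i) + RatFunc.C c) := by
        rw [hquot, ratFuncHeight_div_of_isCoprime hcop]
    _ ≤ ratFuncHeight (∑ i ∈ s, moebiusX (M i)) + ratFuncHeight (RatFunc.C c) :=
        ratFuncHeight_add_le _ _
    _ ≤ ∑ i ∈ s, ratFuncHeight (moebiusX (M i)) := by
        simpa using ratFuncHeight_sum_le s _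
    _ ≤ ∑ _i ∈ s, 1 := Finset.sum_le_sum fun i hi => ratFuncHeight_moebiusX_le_one (hM i hi)
    _ = s.card := s.card_eq_sum_ones.symm

/-- Let `K` be a field, `A = [[a,b],[c,d]]` an invertible matrix over `K`,
`n ≥ 1`, `C ∈ K`, and `F = X + A∘X + ⋯ + A^{n-1}∘X + C` in `K(X)`, written `F = f₁/f₂`
with `f₁, f₂` coprime.  Then `deg f₁ ≤ n`. -/
theorem stmt6 {K : Type*} [Field K] (a b c d : K) (hinv : a * d - b * c ≠ 0)
    (n : ℕ) (hn : 1 ≤ n) (C : K)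
    (A : Matrix (Fin 2) (Fin 2) K) (hA : A = !![a, b; c, d])
    (F : RatFunc K)
    (hF : F = (∑ j ∈ Finset.range n,
        (RatFunc.C ((A ^ j) 0 0) * RatFunc.X + RatFunc.C ((A ^ j) 0 1)) /
          (RatFunc.C ((A ^ j) 1 0) * RatFunc.X + RatFunc.C ((A ^ j) 1 1))) + RatFunc.C C)
    (f₁ f₂ : Polynomial K) (hcop : IsCoprime f₁ f₂)
    (hquot : F = algebraMap (Polynomial K) (RatFunc K) f₁ /
        algebraMap (Polynomial K) (RatFunc K) f₂) :
    f₁.natDegree ≤ n := by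
  have hdet : A.det ≠ 0 := by rwa [hA, Matrix.det_fin_two_of]
  simpa using (le_max_left _ _).trans <| stmt6_general (Finset.range n) (A ^ ·)
    (fun j _ => row_pow_ne_zero_of_det_ne_zero hdet j 1) C hcop (hF.symm.trans hquot)
end

section
/- Let K be a subfield of ℝ, let A = [[a, b], [c, d]] be an invertible 2×2 matrix over K with positive determinant ad − bc > 0, and let f ∈ K[X] be a nonconstant polynomial. Let x₁ ∈ ℂ be a root of f, suppose the Möbius transforms A^j∘x₁ are defined for j = 0, …, n − 1 (all denominators nonzero), and suppose that every complex root of f equals A^j∘x₁ for some j with 0 ≤ j ≤ n − 1. Then every complex root of f is real. -/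
/-!
A real matrix `B = [[p, q], [s, t]]` scales `z.im` by `det B / |s z + t|²`, so a nonnegative
determinant never sends a point of one open half-plane into the other. The conjugate of `x₁` is also
a root of `f`, hence a transform of `x₁`; this forces `x₁` to be real, and real Möbius transforms
keep real points real.
-/

open Polynomial ComplexConjugate

section Moebius

variable {F : Type*} [Field F]

/-- The denominator `s z + t` of the Möbius transform of `z` by `[[p, q], [s, t]]`; the transform is
defined when it is nonzero. -/
def moebiusDenom (B : Matrix (Fin 2) (Fin 2) F) (z : F) : F :=
  B 1 0 * z + B 1 1

/-- The Möbius transform `(p z + q) / (s z + t)` of `z` by the matrix `[[p, q], [s, t]]`, which may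
be singular. It takes the junk value `0` where `moebiusDenom` vanishes. -/
def moebius (B : Matrix (Fin 2) (Fin 2) F) (z : F) : F :=
  (B 0 0 * z + B 0 1) / moebiusDenom B z

end Moebius

section RealMoebius

variable (B : Matrix (Fin 2) (Fin 2) ℝ) (z : ℂ)

theorem moebius_map_ofReal_im :
    (moebius (B.map Complex.ofReal) z).im =
      B.det / Complex.normSq (moebiusDenom (B.map Complex.ofReal) z) * z.im := by
  rw [moebius, Complex.div_im, Matrix.det_fin_two]
  simp only [moebiusDenom, Matrix.map_apply, Complex.add_re, Complex.add_im, Complex.mul_re,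
    Complex.mul_im, Complex.ofReal_re, Complex.ofReal_im]
  ring

variable {B z}

theorem im_eq_zero_of_conj_eq_moebius (hB : 0 ≤ B.det)
    (hz : conj z = moebius (B.map Complex.ofReal) z) : z.im = 0 := by
  set r := B.det / Complex.normSq (moebiusDenom (B.map Complex.ofReal) z)
  have hr_nonneg : 0 ≤ r := div_nonneg hB (Complex.normSq_nonneg _)
  have him : -z.im = r * z.im := by
    rw [← Complex.conj_im, hz, moebius_map_ofReal_im]
  have hmul : (r + 1) * z.im = 0 := by linarith
  exact (mul_eq_zero.1 hmul).resolve_left (by positivity)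

end RealMoebius

theorem fin_two_ofReal_pow (a b c d : ℝ) (j : ℕ) :
    (!![(a : ℂ), (b : ℂ); (c : ℂ), (d : ℂ)]) ^ j =
      (!![a, b; c, d] ^ j).map Complex.ofReal := by
  have hmap : !![(a : ℂ), (b : ℂ); (c : ℂ), (d : ℂ)] =
      Complex.ofRealHom.mapMatrix !![a, b; c, d] := by
    ext i k
    fin_cases i <;> fin_cases k <;> rfl
  rw [hmap, ← map_pow]
  rfl

theorem det_fin_two_pow_nonneg {a b c d : ℝ} (hdet : 0 ≤ a * d - b * c) (j : ℕ) :
    0 ≤ (!![a, b; c, d] ^ j).det := by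
  rw [Matrix.det_pow, Matrix.det_fin_two_of]
  exact pow_nonneg hdet j

theorem stmt8_general (f : ℝ[X]) (x₁ : ℂ) (hx₁ : aeval x₁ f = 0)
    (hcover : ∀ z : ℂ, aeval z f = 0 → ∃ B : Matrix (Fin 2) (Fin 2) ℝ, 0 ≤ B.det ∧
      moebiusDenom (B.map Complex.ofReal) x₁ ≠ 0 ∧ z = moebius (B.map Complex.ofReal) x₁) :
    ∀ z : ℂ, aeval z f = 0 → z.im = 0 := by
  have hconj : aeval (conj x₁) f = 0 := by rw [aeval_conj, hx₁, map_zero]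
  obtain ⟨B, hB, -, hBx₁⟩ := hcover (conj x₁) hconj
  have hx₁_im : x₁.im = 0 := im_eq_zero_of_conj_eq_moebius hB hBx₁
  intro z hz
  obtain ⟨C, -, -, rfl⟩ := hcover z hz
  rw [moebius_map_ofReal_im, hx₁_im, mul_zero]

/-- Let `K ⊆ ℝ`, let `A = [[a,b],[c,d]]` be a matrix over `K` with positive
determinant, and let `f ∈ K[X]` be nonconstant with root `x₁ ∈ ℂ`.  If the Möbius transforms
`A^j ∘ x₁` are defined for `j = 0, …, n-1` and every complex root of `f` is of the form
`A^j ∘ x₁` with `j < n`, then every complex root of `f` is real. -/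
theorem stmt8 (K : Subfield ℝ) (a b c d : K)
    (hdet : 0 < (a : ℝ) * (d : ℝ) - (b : ℝ) * (c : ℝ))
    (f : Polynomial K) (hf : f.natDegree ≠ 0)
    (x₁ : ℂ) (hx₁ : Polynomial.aeval x₁ (f.map (algebraMap K ℝ)) = 0)
    (n : ℕ)
    (M : Matrix (Fin 2) (Fin 2) ℂ)
    (hM : M = !![((a : ℝ) : ℂ), ((b : ℝ) : ℂ); ((c : ℝ) : ℂ), ((d : ℝ) : ℂ)])
    (hden : ∀ j < n, (M ^ j) 1 0 * x₁ + (M ^ j) 1 1 ≠ 0)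
    (hcover : ∀ z : ℂ, Polynomial.aeval z (f.map (algebraMap K ℝ)) = 0 →
      ∃ j < n, z = ((M ^ j) 0 0 * x₁ + (M ^ j) 0 1) / ((M ^ j) 1 0 * x₁ + (M ^ j) 1 1)) :
    ∀ z : ℂ, Polynomial.aeval z (f.map (algebraMap K ℝ)) = 0 → z.im = 0 := by
  subst hM
  simp only [fin_two_ofReal_pow] at hden hcover
  exact stmt8_general _ x₁ hx₁ fun z hz ↦ let ⟨j, hj, hzj⟩ := hcover z hz
    ⟨_, det_fin_two_pow_nonneg hdet.le j, hden j hj, hzj⟩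
end

section
/- Let f ∈ ℚ[X] be an irreducible polynomial of degree 2n with n ≥ 1, let L ⊆ ℂ be the splitting field of f over ℚ, let z ∈ L be a root of f, and suppose there exists an automorphism σ of L over ℚ of order n with σ(z) = z. Then the degree [L : ℚ] is at least 2n². -/
/-!
Let `E / K` be a finite extension. If `σ` fixes a root `z` of the irreducible polynomial `f`, then
`K⟮z⟯` is contained in the fixed field `F` of `⟨σ⟩`. By Artin's theorem `[E : F]` is the order of
`σ`, so in the tower `K ⊆ K⟮z⟯ ⊆ F ⊆ E` the product
`[K⟮z⟯ : K] * [E : F] = deg f * orderOf σ` divides `[E : K]`.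
-/

open Module Polynomial IntermediateField

section

variable {K E : Type*} [Field K] [Field E] [Algebra K E]

theorem finrank_mul_card_dvd_finrank_of_le_fixedField [FiniteDimensional K E]
    {F : IntermediateField K E} {H : Subgroup Gal(E/K)} (hF : F ≤ fixedField H) :
    finrank K F * Nat.card H ∣ finrank K E := by
  rw [← finrank_mul_finrank K (fixedField H) E, finrank_fixedField_eq_card]
  exact mul_dvd_mul_right (finrank_dvd_of_le_right hF) _

theorem adjoin_simple_le_fixedField_zpowers_iff {σ : Gal(E/K)} {z : E} :
    K⟮z⟯ ≤ fixedField (Subgroup.zpowers σ) ↔ σ z = z := by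
  rw [adjoin_simple_le_iff, mem_fixedField_iff]
  exact Subgroup.zpowers_le (H := MulAction.stabilizer Gal(E/K) z)

theorem finrank_adjoin_simple_eq_natDegree_of_irreducible {f : K[X]} (hf : Irreducible f) {z : E}
    (hz : aeval z f = 0) : finrank K K⟮z⟯ = f.natDegree := by
  have hz_integral : IsIntegral K z := IsAlgebraic.isIntegral ⟨f, hf.ne_zero, hz⟩
  have hlead : f.leadingCoeff ≠ 0 := leadingCoeff_ne_zero.2 hf.ne_zero
  rw [adjoin.finrank hz_integral, ← minpoly.eq_of_irreducible hf hz,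
    natDegree_mul_C (inv_ne_zero hlead)]

theorem finiteDimensional_adjoin_rootSet (f : K[X]) :
    FiniteDimensional K (adjoin K (f.rootSet E)) :=
  finiteDimensional_adjoin fun _ hx ↦
    IsAlgebraic.isIntegral ⟨f, ne_zero_of_mem_rootSet hx, aeval_eq_zero_of_mem_rootSet hx⟩

theorem stmt11_general [FiniteDimensional K E] {f : K[X]} (hf : Irreducible f) {z : E}
    (hz : aeval z f = 0) {σ : Gal(E/K)} (hσ : σ z = z) :
    f.natDegree * orderOf σ ∣ finrank K E := by
  rw [← finrank_adjoin_simple_eq_natDegree_of_irreducible hf hz, ← Nat.card_zpowers]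
  exact finrank_mul_card_dvd_finrank_of_le_fixedField
    (adjoin_simple_le_fixedField_zpowers_iff.2 hσ)

end

/-- Let `f ∈ ℚ[X]` be irreducible of degree `2n` (`n ≥ 1`), let `L ⊆ ℂ` be
its splitting field over `ℚ`, let `z ∈ L` be a root of `f`, and suppose some automorphism
`σ` of `L` over `ℚ` has order `n` and fixes `z`.  Then `[L : ℚ] ≥ 2n²`. -/
theorem stmt11 (n : ℕ) (hn : 1 ≤ n) (f : Polynomial ℚ) (hirr : Irreducible f)
    (hdeg : f.natDegree = 2 * n)
    (L : IntermediateField ℚ ℂ) (hL : L = IntermediateField.adjoin ℚ (f.rootSet ℂ))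
    (z : L) (hz : Polynomial.aeval (z : ℂ) f = 0)
    (σ : L ≃ₐ[ℚ] L) (hord : orderOf σ = n) (hfix : σ z = z) :
    2 * n ^ 2 ≤ Module.finrank ℚ L := by
  have : FiniteDimensional ℚ L := hL ▸ finiteDimensional_adjoin_rootSet f
  have hdvd : f.natDegree * orderOf σ ∣ finrank ℚ L :=
    stmt11_general hirr ((aeval_algebraMap_eq_zero_iff ℂ z f).1 hz) hfix
  rw [hdeg, hord, mul_assoc, ← pow_two] at hdvd
  exact Nat.le_of_dvd finrank_pos hdvd
end

section
/- (Theorem 2) Let D be a squarefree integer with D ≥ 2, K = ℚ(√D) ⊆ ℂ, and let ' denote the nontrivial automorphism of K, extended coefficientwise to K[X]. Let n ≥ 3 and let f₁ ∈ K[X] be monic of degree n, not lying in ℚ[X], such that: (i) f₁ has a root x₁ ∈ ℂ with all complex roots of f₁ contained in K(x₁), and (ii) the conjugate polynomial f₁' has a root y₁ ∈ ℂ with all complex roots of f₁' contained in K(y₁). Suppose f = f₁·f₁' (which has rational coefficients) is irreducible in ℚ[X], and suppose there exists an automorphism σ of the splitting field of f over ℚ of order n fixing some root z of f (as is guaranteed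 when an integer multiple of f has a factorization of type (n, 1, …, 1) modulo some prime p). Then L = K(x₁, y₁) is the splitting field of f over ℚ, and [L : ℚ] = 2n². -/
/-- The quadratic field `ℚ(√D)` as a subfield of `ℂ`. -/
noncomputable def ratSqrtField (D : ℤ) : IntermediateField ℚ ℂ :=
  IntermediateField.adjoin ℚ {((Real.sqrt (D : ℝ) : ℝ) : ℂ)}

/-- `√D` as an element of `ℚ(√D)`. -/
noncomputable def ratSqrt (D : ℤ) : ratSqrtField D :=
  ⟨((Real.sqrt (D : ℝ) : ℝ) : ℂ), IntermediateField.subset_adjoin ℚ _ rfl⟩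

/-!
The splitting field `E` of `g` lies in `K(x₁, y₁)`, whose degree is at most
`[K : ℚ] · deg f₁ · deg f₁' = 2n²`. Conversely, a root `z ∈ E` of `g` generates an extension of
degree `deg g = 2n` lying in the fixed field of `⟨τ⟩`, over which `E` has degree `n` by Artin's
theorem; so `2n · n` divides `[E : ℚ]`, and the two fields coincide.
-/

open Polynomial IntermediateField Module

section Degree

variable {F E : Type*} [Field F] [Field E] [Algebra F E]

theorem finrank_adjoin_simple_le_natDegree {p : F[X]} (hp : p ≠ 0) {x : E}
    (hx : aeval x p = 0) : finrank F F⟮x⟯ ≤ p.natDegree := by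
  have hint : IsIntegral F x := IsAlgebraic.isIntegral ⟨p, hp, hx⟩
  rw [adjoin.finrank hint]
  exact natDegree_le_of_dvd (minpoly.dvd F x hx) hp

theorem finrank_adjoin_simple_eq_natDegree {g : F[X]} (hg : Irreducible g) {z : E}
    (hz : aeval z g = 0) : finrank F F⟮z⟯ = g.natDegree := by
  have hint : IsIntegral F z := IsAlgebraic.isIntegral ⟨g, hg.ne_zero, hz⟩
  rw [adjoin.finrank hint, ← minpoly.eq_of_irreducible hg hz,
    natDegree_mul_C (inv_ne_zero (leadingCoeff_ne_zero.mpr hg.ne_zero))]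

theorem finrank_adjoin_pair_le_natDegree_mul {p q : F[X]} (hp : p ≠ 0) (hq : q ≠ 0) {x y : E}
    (hx : aeval x p = 0) (hy : aeval y q = 0) :
    finrank F F⟮x, y⟯ ≤ p.natDegree * q.natDegree := by
  rw [← Set.singleton_union, adjoin_union]
  calc finrank F ↥(F⟮x⟯ ⊔ F⟮y⟯) ≤ finrank F F⟮x⟯ * finrank F F⟮y⟯ := finrank_sup_le _ _
    _ ≤ p.natDegree * q.natDegree :=
      Nat.mul_le_mul (finrank_adjoin_simple_le_natDegree hp hx)
        (finrank_adjoin_simple_le_natDegree hq hy)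

theorem natDegree_mul_card_dvd_finrank [FiniteDimensional F E] {g : F[X]} (hg : Irreducible g)
    {z : E} (hz : aeval z g = 0) {H : Subgroup (E ≃ₐ[F] E)} (hH : ∀ τ ∈ H, τ z = z) :
    g.natDegree * Nat.card H ∣ finrank F E := by
  have hle : F⟮z⟯ ≤ fixedField H := adjoin_simple_le_iff.mpr fun τ ↦ hH τ τ.2
  rw [← finrank_mul_finrank F (fixedField H) E, finrank_fixedField_eq_card,
    ← finrank_adjoin_simple_eq_natDegree hg hz]
  exact Nat.mul_dvd_mul_right (finrank_dvd_of_le_right hle) _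

theorem natDegree_mul_orderOf_dvd_finrank [FiniteDimensional F E] {g : F[X]}
    (hg : Irreducible g) {z : E} (hz : aeval z g = 0) {τ : E ≃ₐ[F] E} (hτ : τ z = z) :
    g.natDegree * orderOf τ ∣ finrank F E := by
  have hstab : Subgroup.zpowers τ ≤ MulAction.stabilizer (E ≃ₐ[F] E) z :=
    Subgroup.zpowers_le.mpr hτ
  rw [← Nat.card_zpowers]
  exact natDegree_mul_card_dvd_finrank hg hz hstab

end Degree

section Factorization

variable {F Ω : Type*} [Field F] [Field Ω] [Algebra F Ω] {K : IntermediateField F Ω}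
  {f₁ f₂ : K[X]} {x₁ y₁ : Ω} {g : F[X]}

theorem adjoin_rootSet_le_restrictScalars_adjoin_pair
    (hx : ∀ w : Ω, aeval w f₁ = 0 → w ∈ adjoin K {x₁})
    (hy : ∀ w : Ω, aeval w f₂ = 0 → w ∈ adjoin K {y₁})
    (hg : g.map (algebraMap F K) = f₁ * f₂) :
    adjoin F (g.rootSet Ω) ≤ (adjoin K {x₁, y₁}).restrictScalars F := by
  refine adjoin_le_iff.mpr fun w hw ↦ ?_
  have hroot : aeval w f₁ = 0 ∨ aeval w f₂ = 0 := by
    rw [← mul_eq_zero, ← map_mul, ← hg, aeval_map_algebraMap]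
    exact aeval_eq_zero_of_mem_rootSet hw
  rcases hroot with hw₁ | hw₂
  · exact adjoin.mono K _ _ (by simp) (hx w hw₁)
  · exact adjoin.mono K _ _ (by simp) (hy w hw₂)

theorem finrank_restrictScalars_adjoin_pair_le (hf₁ : f₁ ≠ 0) (hf₂ : f₂ ≠ 0)
    (hx₁ : aeval x₁ f₁ = 0) (hy₁ : aeval y₁ f₂ = 0) :
    finrank F ((adjoin K {x₁, y₁}).restrictScalars F) ≤
      finrank F K * (f₁.natDegree * f₂.natDegree) :=
  calc finrank F (adjoin K {x₁, y₁})
    _ = finrank F K * finrank K (adjoin K {x₁, y₁}) :=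
      (finrank_mul_finrank F K (adjoin K {x₁, y₁})).symm
    _ ≤ finrank F K * (f₁.natDegree * f₂.natDegree) :=
      Nat.mul_le_mul_left _ (finrank_adjoin_pair_le_natDegree_mul hf₁ hf₂ hx₁ hy₁)

theorem stmt12_general (hK : finrank F K = 2) {n : ℕ}
    (hdeg₁ : f₁.natDegree = n) (hdeg₂ : f₂.natDegree = n)
    (hx₁ : aeval x₁ f₁ = 0) (hx : ∀ w : Ω, aeval w f₁ = 0 → w ∈ adjoin K {x₁})
    (hy₁ : aeval y₁ f₂ = 0) (hy : ∀ w : Ω, aeval w f₂ = 0 → w ∈ adjoin K {y₁})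
    (hg : g.map (algebraMap F K) = f₁ * f₂) (hirr : Irreducible g)
    {τ : adjoin F (g.rootSet Ω) ≃ₐ[F] adjoin F (g.rootSet Ω)} (hτord : orderOf τ = n)
    {z : adjoin F (g.rootSet Ω)} (hz : aeval (z : Ω) g = 0) (hτz : τ z = z) :
    (adjoin K {x₁, y₁}).restrictScalars F = adjoin F (g.rootSet Ω) ∧
      finrank F ((adjoin K {x₁, y₁}).restrictScalars F) = 2 * n ^ 2 := by
  have hf : f₁ * f₂ ≠ 0 := hg ▸ Polynomial.map_ne_zero hirr.ne_zero
  have hf₁ : f₁ ≠ 0 := left_ne_zero_of_mul hf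
  have hf₂ : f₂ ≠ 0 := right_ne_zero_of_mul hf
  have hgdeg : g.natDegree = 2 * n := by
    rw [← natDegree_map (algebraMap F K), hg, natDegree_mul hf₁ hf₂, hdeg₁, hdeg₂, two_mul]
  have hle := adjoin_rootSet_le_restrictScalars_adjoin_pair hx hy hg
  have : FiniteDimensional F K := finite_of_finrank_eq_succ hK
  have : FiniteDimensional K (adjoin K {x₁, y₁}) :=
    finiteDimensional_adjoin_pair (IsAlgebraic.isIntegral ⟨f₁, hf₁, hx₁⟩)
      (IsAlgebraic.isIntegral ⟨f₂, hf₂, hy₁⟩)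
  have : FiniteDimensional F ((adjoin K {x₁, y₁}).restrictScalars F) :=
    FiniteDimensional.trans F K (adjoin K {x₁, y₁})
  have : FiniteDimensional F (adjoin F (g.rootSet Ω)) :=
    Module.Finite.of_injective (inclusion hle).toLinearMap (inclusion_injective hle)
  have hupper := finrank_restrictScalars_adjoin_pair_le hf₁ hf₂ hx₁ hy₁
  rw [hK, hdeg₁, hdeg₂, ← sq] at hupper
  have hlower : 2 * n ^ 2 ≤ finrank F (adjoin F (g.rootSet Ω)) := by
    have hz' : aeval z g = 0 := by rwa [aeval_coe, ZeroMemClass.coe_eq_zero] at hz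
    have hdvd := natDegree_mul_orderOf_dvd_finrank hirr hz' hτz
    rw [hgdeg, hτord, mul_assoc, ← sq] at hdvd
    exact Nat.le_of_dvd finrank_pos hdvd
  have heq := eq_of_le_of_finrank_le hle (hupper.trans hlower)
  exact ⟨heq.symm, hupper.antisymm (heq ▸ hlower)⟩

end Factorization

section QuadraticField

theorem not_isSquare_of_squarefree {M : Type*} [Monoid M] {a : M} (ha : Squarefree a)
    (hunit : ¬ IsUnit a) : ¬ IsSquare a := by
  rintro ⟨r, rfl⟩
  exact hunit ((ha r dvd_rfl).mul (ha r dvd_rfl))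

theorem finrank_ratSqrtField {D : ℤ} (hD₀ : 0 ≤ D) (hD : ¬ IsSquare D) :
    finrank ℚ (ratSqrtField D) = 2 := by
  have hroot : aeval ((√(D : ℝ) : ℝ) : ℂ) (X ^ 2 - C (D : ℚ)) = 0 := by
    have hsq : (((√(D : ℝ) : ℝ) : ℂ)) ^ 2 = D := by
      exact_mod_cast congrArg Complex.ofReal (Real.sq_sqrt (Int.cast_nonneg hD₀))
    simp [hsq]
  have hirr : Irreducible (X ^ 2 - C (D : ℚ)) := by
    rw [X_pow_sub_C_irreducible_iff_of_prime Nat.prime_two]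
    intro r hr
    exact hD (Rat.isSquare_intCast_iff.mp ⟨r, by rw [← hr, sq]⟩)
  rw [ratSqrtField, finrank_adjoin_simple_eq_natDegree hirr hroot, natDegree_X_pow_sub_C]

theorem finrank_ratSqrtField_of_squarefree {D : ℤ} (hD : Squarefree D) (hD₂ : 2 ≤ D) :
    finrank ℚ (ratSqrtField D) = 2 := by
  have hunit : ¬ IsUnit D := fun h ↦ by rcases Int.isUnit_iff.mp h with rfl | rfl <;> omega
  exact finrank_ratSqrtField (by omega) (not_isSquare_of_squarefree hD hunit)

theorem restrictScalars_adjoin_ratSqrtField (D : ℤ) (S : Set ℂ) :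
    (adjoin (ratSqrtField D) S).restrictScalars ℚ =
      adjoin ℚ (insert ((√(D : ℝ) : ℝ) : ℂ) S) :=
  adjoin_adjoin_left ℚ _ S

end QuadraticField

/-- **Theorem 2.** Let `D ≥ 2` be squarefree, `K = ℚ(√D) ⊆ ℂ` with nontrivial
automorphism `σ` (`σ(√D) = -√D`), `n ≥ 3`, and let `f₁ ∈ K[X]` be monic of degree `n`, not in
`ℚ[X]`, such that all roots of `f₁` lie in `K(x₁)` for a root `x₁` and all roots of the
conjugate polynomial `f₁'` lie in `K(y₁)` for a root `y₁`.  Suppose `f = f₁·f₁'` equals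
`g ∈ ℚ[X]` which is irreducible over `ℚ`, and that some automorphism of the splitting field
of `g` over `ℚ` has order `n` and fixes a root `z` of `g`.  Then `L = K(x₁, y₁) = ℚ(√D, x₁, y₁)`
is the splitting field of `f` over `ℚ`, and `[L : ℚ] = 2n²`. -/
theorem stmt12 (D : ℤ) (hD : Squarefree D) (hD2 : 2 ≤ D)
    (σ : ratSqrtField D ≃ₐ[ℚ] ratSqrtField D)
    (hσ : σ (ratSqrt D) = -ratSqrt D)
    (n : ℕ) (hn : 3 ≤ n)
    (f₁ : Polynomial (ratSqrtField D)) (hmonic : f₁.Monic) (hdeg : f₁.natDegree = n)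
    (hnotQ : ¬ ∀ i : ℕ, f₁.coeff i ∈ (algebraMap ℚ (ratSqrtField D)).range)
    (x₁ y₁ : ℂ)
    (hx₁ : Polynomial.aeval x₁ f₁ = 0)
    (hxall : ∀ z : ℂ, Polynomial.aeval z f₁ = 0 →
      z ∈ IntermediateField.adjoin (ratSqrtField D) {x₁})
    (hy₁ : Polynomial.aeval y₁ (f₁.map (σ : ratSqrtField D →+* ratSqrtField D)) = 0)
    (hyall : ∀ z : ℂ,
      Polynomial.aeval z (f₁.map (σ : ratSqrtField D →+* ratSqrtField D)) = 0 →
      z ∈ IntermediateField.adjoin (ratSqrtField D) {y₁})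
    (g : Polynomial ℚ)
    (hg : g.map (algebraMap ℚ (ratSqrtField D)) =
      f₁ * f₁.map (σ : ratSqrtField D →+* ratSqrtField D))
    (hirr : Irreducible g)
    (τ : (IntermediateField.adjoin ℚ (g.rootSet ℂ)) ≃ₐ[ℚ]
      (IntermediateField.adjoin ℚ (g.rootSet ℂ)))
    (hτord : orderOf τ = n)
    (z : IntermediateField.adjoin ℚ (g.rootSet ℂ))
    (hzroot : Polynomial.aeval (z : ℂ) g = 0)
    (hτz : τ z = z) :
    IntermediateField.adjoin ℚ {((Real.sqrt (D : ℝ) : ℝ) : ℂ), x₁, y₁} =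
      IntermediateField.adjoin ℚ (g.rootSet ℂ) ∧
    Module.finrank ℚ
      (IntermediateField.adjoin ℚ {((Real.sqrt (D : ℝ) : ℝ) : ℂ), x₁, y₁}) = 2 * n ^ 2 := by
  rw [← restrictScalars_adjoin_ratSqrtField]
  exact stmt12_general (finrank_ratSqrtField_of_squarefree hD hD2) hdeg
    ((natDegree_map _).trans hdeg) hx₁ hxall hy₁ hyall hg hirr hτord hzroot hτz
end

section
/- Let n ≥ 3 and let G be a group generated by three elements σ, τ, ρ satisfying: σ and τ commute, σ and τ each have order n, the cyclic subgroups ⟨σ⟩ and ⟨τ⟩ intersect trivially, ρ has order 2, and ρσρ⁻¹ = τ. Let H' = ⟨στ, ρ⟩ be the subgroup generated by στ and ρ. Then H' is abelian of order 2n, but H' is not a normal subgroup of G; specifically, σρσ⁻¹ does not lie in H'. -/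
/-!
Conjugation by the involution `ρ` swaps `σ` and `τ`, so it fixes `στ`, and `H'` is the internal
direct product `⟨στ⟩ × ⟨ρ⟩`: if `ρ` were a power of `στ`, it would commute with `σ`, forcing
`σ = τ`. Since `H'` is abelian and contains `ρ`, it can contain `σρσ⁻¹ = στ⁻¹ρ` only if `ρ` commutes
with `στ⁻¹`; but `ρ` conjugates `στ⁻¹` to its inverse, so this would give
`σ² = τ² ∈ ⟨σ⟩ ∩ ⟨τ⟩ = 1`, whereas `σ` has order at least `3`.
-/

section CommutingSubgroups

variable {G : Type*} [Group G]

theorem orderOf_mul_eq_lcm_of_disjoint_zpowers {a b : G} (hab : Commute a b)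
    (hdisj : Disjoint (Subgroup.zpowers a) (Subgroup.zpowers b)) :
    orderOf (a * b) = (orderOf a).lcm (orderOf b) := by
  refine Nat.dvd_antisymm hab.orderOf_mul_dvd_lcm ?_
  have hpow : a ^ orderOf (a * b) * b ^ orderOf (a * b) = 1 := by
    rw [← hab.mul_pow, pow_orderOf_eq_one]
  obtain ⟨ha, hb⟩ := Subgroup.disjoint_iff_mul_eq_one.mp hdisj
    (Subgroup.npow_mem_zpowers a _) (Subgroup.npow_mem_zpowers b _) hpow
  exact Nat.lcm_dvd (orderOf_dvd_of_pow_eq_one ha) (orderOf_dvd_of_pow_eq_one hb)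

theorem disjoint_zpowers_of_prime_orderOf {H : Subgroup G} {g : G} (hprime : (orderOf g).Prime)
    (hg : g ∉ H) : Disjoint H (Subgroup.zpowers g) := by
  have : Fact (Nat.card (Subgroup.zpowers g)).Prime := ⟨by rwa [Nat.card_zpowers]⟩
  rw [← Subgroup.subgroupOf_eq_bot]
  refine (H.subgroupOf (Subgroup.zpowers g)).eq_bot_or_eq_top_of_prime_card.resolve_right ?_
  rwa [Subgroup.subgroupOf_eq_top, Subgroup.zpowers_le]

theorem card_sup_of_commute_of_disjoint {H K : Subgroup G}
    (hcomm : ∀ x ∈ H, ∀ y ∈ K, Commute x y) (hdisj : Disjoint H K) :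
    Nat.card (H ⊔ K : Subgroup G) = Nat.card H * Nat.card K := by
  let mulHom : H × K →* G :=
    H.subtype.noncommCoprod K.subtype fun x y => hcomm x x.2 y y.2
  have hinj : Function.Injective mulHom :=
    (MonoidHom.noncommCoprod_injective _ _ _).mpr
      ⟨H.subtype_injective, K.subtype_injective, by simpa only [Subgroup.range_subtype]⟩
  have hrange : mulHom.range = H ⊔ K := by
    simpa only [Subgroup.range_subtype] using MonoidHom.noncommCoprod_range H.subtype K.subtype _
  rw [← hrange, ← Nat.card_congr (MonoidHom.ofInjective hinj).toEquiv, Nat.card_prod]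

theorem card_closure_pair_of_commute_of_disjoint {a b : G} (hab : Commute a b)
    (hdisj : Disjoint (Subgroup.zpowers a) (Subgroup.zpowers b)) :
    Nat.card (Subgroup.closure {a, b}) = orderOf a * orderOf b := by
  have hcomm : ∀ x ∈ Subgroup.zpowers a, ∀ y ∈ Subgroup.zpowers b, Commute x y := by
    rintro _ ⟨i, rfl⟩ _ ⟨j, rfl⟩
    exact hab.zpow_zpow i j
  rw [Set.insert_eq, Subgroup.closure_union, ← Subgroup.zpowers_eq_closure,
    ← Subgroup.zpowers_eq_closure, card_sup_of_commute_of_disjoint hcomm hdisj,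
    Nat.card_zpowers, Nat.card_zpowers]

theorem mul_comm_of_mem_closure_pair {a b : G} (hab : Commute a b) :
    ∀ x ∈ Subgroup.closure {a, b}, ∀ y ∈ Subgroup.closure {a, b}, x * y = y * x := by
  have : IsMulCommutative (Subgroup.closure {a, b}) := by
    refine Subgroup.isMulCommutative_closure ?_
    rintro x (rfl | rfl) y (rfl | rfl)
    exacts [rfl, hab, hab.symm, rfl]
  exact fun x hx y hy => setLike_mul_comm hx hy

end CommutingSubgroups

section Swap

variable {G : Type*} [Group G] {σ τ ρ : G}

theorem commute_mul_of_semiconjBy_swap (hστ : Commute σ τ) (hρσ : SemiconjBy ρ σ τ)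
    (hρτ : SemiconjBy ρ τ σ) : Commute (σ * τ) ρ := by
  have hswap : SemiconjBy ρ (σ * τ) (τ * σ) := hρσ.mul_right hρτ
  rw [← hστ.eq] at hswap
  exact Commute.symm hswap

theorem notMem_zpowers_mul_of_semiconjBy (hστ : Commute σ τ) (hρσ : SemiconjBy ρ σ τ)
    (hne : σ ≠ τ) : ρ ∉ Subgroup.zpowers (σ * τ) := by
  rintro ⟨k, rfl⟩
  have hcomm : Commute ((σ * τ) ^ k) σ := ((Commute.refl σ).mul_left hστ.symm).zpow_left k
  exact hne (mul_right_cancel (hcomm.eq.symm.trans hρσ.eq))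

theorem sq_eq_sq_of_commute_conj (hστ : Commute σ τ) (hρσ : SemiconjBy ρ σ τ)
    (hρτ : SemiconjBy ρ τ σ) (hconj : Commute (σ * ρ * σ⁻¹) ρ) : σ ^ 2 = τ ^ 2 := by
  have hconj_eq : σ * ρ * σ⁻¹ = σ * τ⁻¹ * ρ := by
    rw [mul_assoc, hρσ.inv_right.eq, mul_assoc]
  have hfix : Commute ρ (σ * τ⁻¹) := by
    rw [hconj_eq] at hconj
    simpa only [mul_inv_cancel_right] using (hconj.mul_left (Commute.refl ρ).inv_left).symm
  have hinvert : SemiconjBy ρ (σ * τ⁻¹) (τ * σ⁻¹) := hρσ.mul_right hρτ.inv_right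
  have hquot : σ * τ⁻¹ = τ * σ⁻¹ := mul_right_cancel (hfix.eq.symm.trans hinvert.eq)
  calc
    σ ^ 2 = σ * τ⁻¹ * (τ * σ) := by rw [sq]; group
    _ = τ * σ⁻¹ * (σ * τ) := by rw [hquot, hστ.eq]
    _ = τ ^ 2 := by rw [sq]; group

end Swap

theorem stmt16_general {G : Type*} [Group G] (n : ℕ) (hn : 3 ≤ n) (σ τ ρ : G)
    (hcomm : σ * τ = τ * σ) (hσ : orderOf σ = n)
    (hint : Subgroup.zpowers σ ⊓ Subgroup.zpowers τ = ⊥)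
    (hρ : orderOf ρ = 2) (hconj : ρ * σ * ρ⁻¹ = τ) :
    (∀ x ∈ Subgroup.closure {σ * τ, ρ}, ∀ y ∈ Subgroup.closure {σ * τ, ρ}, x * y = y * x) ∧
    Nat.card (Subgroup.closure {σ * τ, ρ}) = 2 * n ∧
    ¬ (Subgroup.closure {σ * τ, ρ}).Normal ∧
    σ * ρ * σ⁻¹ ∉ Subgroup.closure {σ * τ, ρ} := by
  have hdisj : Disjoint (Subgroup.zpowers σ) (Subgroup.zpowers τ) := disjoint_iff.mpr hint
  have hρσ : SemiconjBy ρ σ τ := hconj ▸ SemiconjBy.conj_mk ρ σ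
  have hρ_inv : ρ⁻¹ = ρ := inv_eq_self_of_orderOf_eq_two hρ
  have hρτ : SemiconjBy ρ τ σ := by simpa only [hρ_inv] using hρσ.inv_symm_left
  have hστρ : Commute (σ * τ) ρ := commute_mul_of_semiconjBy_swap hcomm hρσ hρτ
  have hsq : σ ^ 2 ≠ τ ^ 2 := fun h => by
    have hone : σ ^ 2 = 1 := Subgroup.disjoint_def.mp hdisj
      (Subgroup.npow_mem_zpowers σ 2) (h ▸ Subgroup.npow_mem_zpowers τ 2)
    exact pow_ne_one_of_lt_orderOf two_ne_zero (by omega) hone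
  have hρ_notMem : ρ ∉ Subgroup.zpowers (σ * τ) :=
    notMem_zpowers_mul_of_semiconjBy hcomm hρσ fun h => hsq (h ▸ rfl)
  have hab := mul_comm_of_mem_closure_pair hστρ
  have hρ_mem : ρ ∈ Subgroup.closure {σ * τ, ρ} := Subgroup.subset_closure (Or.inr rfl)
  have hnot : σ * ρ * σ⁻¹ ∉ Subgroup.closure {σ * τ, ρ} := fun hmem =>
    hsq (sq_eq_sq_of_commute_conj hcomm hρσ hρτ (hab _ hmem ρ hρ_mem))
  refine ⟨hab, ?_, fun hnormal => hnot (hnormal.conj_mem ρ hρ_mem σ), hnot⟩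
  have hρ_disj := disjoint_zpowers_of_prime_orderOf (hρ ▸ Nat.prime_two) hρ_notMem
  rw [card_closure_pair_of_commute_of_disjoint hστρ hρ_disj,
    orderOf_mul_eq_lcm_of_disjoint_zpowers hcomm hdisj, ← hρσ.orderOf_eq, Nat.lcm_self,
    hσ, hρ, mul_comm]

/-- Let `n ≥ 3` and `G` be generated by `σ, τ, ρ` as before, and let
`H' = ⟨στ, ρ⟩`.  Then `H'` is abelian of order `2n`, but is not normal in `G`; specifically
`σρσ⁻¹ ∉ H'`. -/
theorem stmt16 {G : Type*} [Group G] (n : ℕ) (hn : 3 ≤ n) (σ τ ρ : G)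
    (hgen : Subgroup.closure {σ, τ, ρ} = ⊤)
    (hcomm : σ * τ = τ * σ)
    (hσ : orderOf σ = n) (hτ : orderOf τ = n)
    (hint : Subgroup.zpowers σ ⊓ Subgroup.zpowers τ = ⊥)
    (hρ : orderOf ρ = 2) (hconj : ρ * σ * ρ⁻¹ = τ) :
    (∀ x ∈ Subgroup.closure {σ * τ, ρ}, ∀ y ∈ Subgroup.closure {σ * τ, ρ}, x * y = y * x) ∧
    Nat.card (Subgroup.closure {σ * τ, ρ}) = 2 * n ∧
    ¬ (Subgroup.closure {σ * τ, ρ}).Normal ∧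
    σ * ρ * σ⁻¹ ∉ Subgroup.closure {σ * τ, ρ} :=
  stmt16_general n hn σ τ ρ hcomm hσ hint hρ hconj
end

section
/- Let n ≥ 3, let L ⊆ ℂ be a finite Galois extension of ℚ with Galois group G = Gal(L/ℚ) of order 2n², and suppose G is generated by elements σ, τ, ρ satisfying: σ and τ commute, σ and τ each have order n, ⟨σ⟩ ∩ ⟨τ⟩ is trivial, ρ has order 2, and ρσρ⁻¹ = τ. Let H' = ⟨στ, ρ⟩ and let z ∈ L be an element whose stabilizer {μ ∈ G : μ(z) = z} is exactly H'. Then the minimal polynomial g of z over ℚ has degree n, the extension ℚ(z)/ℚ is not Galois, and the Galois group of the splitting field of g over ℚ is isomorphic to the dihedral group D_n of order 2n. -/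
set_option synthInstance.maxHeartbeats 1000000
set_option maxHeartbeats 1000000

/-!
The element `στ` is central, because `ρ` swaps `σ` and `τ`. Modulo `⟨στ⟩` the image of `τ` is
inverse to that of `σ`, so `G ⧸ ⟨στ⟩` is dihedral, with rotation `σ` and reflection `ρ`. Hence
`⟨στ, ρ⟩` is the preimage of a subgroup of `Dₙ` generated by a reflection. For `n ≥ 3` such a
subgroup has index `n` and trivial normal core, and in particular it is not normal. Galois theory
reads the three claims off the stabilizer of `z`: its index is the degree of `z`, its normality is
necessary for `F(z)/F` to be Galois, and the quotient by its normal core is the Galois group of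
the splitting field of the minimal polynomial.
-/

open scoped IntermediateField

section DihedralGroup

variable {Q : Type*} [Group Q] {n : ℕ} {s t : Q}

/-- The homomorphism from `Dₙ` to a group `Q` determined by elements `s`, `t` of `Q` satisfying the
defining relations of `Dₙ`: the rotation `r i` goes to `s ^ i` and the reflection `sr i` to
`t * s ^ i`, the power `s ^ i` for `i : ZMod n` being encoded by `ZMod.lift`. -/
def dihedralLift (hs : s ^ n = 1) (ht : t * t = 1) (hst : SemiconjBy t s s⁻¹) :
    DihedralGroup n →* Q :=
  let power : ZMod n →+ Additive Q :=
    ZMod.lift n ⟨zmultiplesHom (Additive Q) (.ofMul s), by simp [← ofMul_pow, hs]⟩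
  MonoidHom.mk'
    (fun
      | .r i => (power i).toMul
      | .sr i => t * (power i).toMul)
    (by
      have power_mul_reflection (i : ZMod n) :
          (power i).toMul * t = t * (power (-i)).toMul := by
        obtain ⟨k, rfl⟩ := ZMod.intCast_surjective i
        simpa [power] using (hst.zpow_right (-k)).eq.symm
      rintro (i | i) (j | j)
      · simp
      · simp only [DihedralGroup.r_mul_sr]
        rw [← mul_assoc, power_mul_reflection, mul_assoc, ← toMul_add, ← map_add, neg_add_eq_sub]
      · simp [mul_assoc]
      · simp only [DihedralGroup.sr_mul_sr]
        rw [mul_assoc t, ← mul_assoc _ t, power_mul_reflection, mul_assoc, ← mul_assoc t, ht,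
          one_mul, ← toMul_add, ← map_add, neg_add_eq_sub])

@[simp]
theorem dihedralLift_r_intCast (hs : s ^ n = 1) (ht : t * t = 1) (hst : SemiconjBy t s s⁻¹)
    (k : ℤ) : dihedralLift hs ht hst (.r k) = s ^ k := by
  simp [dihedralLift]

@[simp]
theorem dihedralLift_sr_intCast (hs : s ^ n = 1) (ht : t * t = 1) (hst : SemiconjBy t s s⁻¹)
    (k : ℤ) : dihedralLift hs ht hst (.sr k) = t * s ^ k := by
  simp [dihedralLift]

theorem dihedralLift_injective (hs : orderOf s = n) (ht : t * t = 1)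
    (hst : SemiconjBy t s s⁻¹) (hts : t ∉ Subgroup.zpowers s) :
    Function.Injective (dihedralLift (hs ▸ pow_orderOf_eq_one s) ht hst) := by
  rw [injective_iff_map_eq_one]
  rintro (i | i) hi <;> obtain ⟨k, rfl⟩ := ZMod.intCast_surjective i
  · rw [dihedralLift_r_intCast, ← orderOf_dvd_iff_zpow_eq_one, hs] at hi
    rw [(ZMod.intCast_zmod_eq_zero_iff_dvd k n).2 hi, DihedralGroup.r_zero]
  · rw [dihedralLift_sr_intCast] at hi
    exact absurd ⟨-k, by simpa using (eq_inv_of_mul_eq_one_left hi).symm⟩ hts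

theorem dihedralLift_surjective (hs : s ^ n = 1) (ht : t * t = 1)
    (hst : SemiconjBy t s s⁻¹) (hgen : Subgroup.closure {s, t} = ⊤) :
    Function.Surjective (dihedralLift hs ht hst) := by
  rw [← MonoidHom.range_eq_top, eq_top_iff, ← hgen, Subgroup.closure_le, Set.pair_subset_iff]
  exact ⟨⟨.r (1 : ℤ), by simp [-Int.cast_one]⟩, ⟨.sr (0 : ℤ), by simp [-Int.cast_zero]⟩⟩

theorem exists_mulEquiv_dihedralGroup (hs : orderOf s = n) (ht : t * t = 1)
    (hst : SemiconjBy t s s⁻¹) (hts : t ∉ Subgroup.zpowers s)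
    (hgen : Subgroup.closure {s, t} = ⊤) :
    ∃ e : Q ≃* DihedralGroup n, e t = .sr 0 := by
  have hbij : Function.Bijective (dihedralLift (hs ▸ pow_orderOf_eq_one s) ht hst) :=
    ⟨dihedralLift_injective hs ht hst hts, dihedralLift_surjective _ ht hst hgen⟩
  refine ⟨(MulEquiv.ofBijective _ hbij).symm, (MulEquiv.symm_apply_eq _).2 ?_⟩
  simpa using (dihedralLift_sr_intCast (hs ▸ pow_orderOf_eq_one s) ht hst 0).symm

theorem index_zpowers_sr (i : ZMod n) :
    (Subgroup.zpowers (DihedralGroup.sr i)).index = n := by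
  have h := (Subgroup.zpowers (DihedralGroup.sr i)).index_mul_card
  rw [Nat.card_zpowers, DihedralGroup.orderOf_sr, DihedralGroup.nat_card] at h
  omega

theorem mem_zpowers_sr_iff {i : ZMod n} {x : DihedralGroup n} :
    x ∈ Subgroup.zpowers (DihedralGroup.sr i) ↔ x = 1 ∨ x = .sr i := by
  refine ⟨?_, ?_⟩
  · rintro ⟨k, rfl⟩
    have hsq : DihedralGroup.sr i ^ (2 : ℤ) = 1 := by rw [zpow_two, DihedralGroup.sr_mul_self]
    rcases Int.even_or_odd' k with ⟨m, rfl | rfl⟩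
    · exact .inl (by simp only [zpow_mul, hsq, one_zpow])
    · exact .inr (by simp only [zpow_add, zpow_mul, hsq, one_zpow, one_mul, zpow_one])
  · rintro (rfl | rfl)
    exacts [one_mem _, Subgroup.mem_zpowers _]

theorem normalCore_zpowers_sr (hn : ¬ n ∣ 2) (i : ZMod n) :
    (Subgroup.zpowers (DihedralGroup.sr i)).normalCore = ⊥ := by
  refine (Subgroup.eq_bot_iff_forall _).2 fun x hx ↦
    (mem_zpowers_sr_iff.1 (Subgroup.normalCore_le _ hx)).resolve_right ?_
  rintro rfl
  have hconj : DihedralGroup.sr (i - 1 + -1) ∈ Subgroup.zpowers (DihedralGroup.sr i) := by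
    simpa using hx (.r 1)
  rcases mem_zpowers_sr_iff.1 hconj with h | h
  · simp [DihedralGroup.one_def, -DihedralGroup.r_zero] at h
  · have htwo : ((2 : ℕ) : ZMod n) = 0 := by
      push_cast
      linear_combination -(DihedralGroup.sr.inj h)
    exact hn ((ZMod.natCast_eq_zero_iff 2 n).1 htwo)

theorem not_normal_zpowers_sr (hn : ¬ n ∣ 2) (i : ZMod n) :
    ¬ (Subgroup.zpowers (DihedralGroup.sr i)).Normal := by
  intro hnormal
  have hbot := normalCore_zpowers_sr hn i
  rw [Subgroup.normalCore_eq_self, Subgroup.zpowers_eq_bot, ← orderOf_eq_one_iff,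
    DihedralGroup.orderOf_sr] at hbot
  omega

end DihedralGroup

section Group

variable {G : Type*} [Group G]

theorem normalCore_stabilizer {α : Type*} [MulAction G α] (a : α) :
    (MulAction.stabilizer G a).normalCore = fixingSubgroup G (MulAction.orbit G a) := by
  ext g
  constructor
  · rintro hg ⟨_, x, rfl⟩
    simpa [mul_smul, inv_smul_eq_iff] using hg x⁻¹
  · intro hg x
    have hx : g • x⁻¹ • a = x⁻¹ • a := hg ⟨x⁻¹ • a, x⁻¹, rfl⟩
    rw [MulAction.mem_stabilizer_iff, mul_smul, mul_smul, hx, smul_inv_smul]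

theorem normalCore_comap_of_surjective {D : Type*} [Group D] {π : G →* D}
    (hπ : Function.Surjective π) (K : Subgroup D) :
    (K.comap π).normalCore = K.normalCore.comap π := by
  refine le_antisymm (fun g hg d ↦ ?_)
    (Subgroup.normal_le_normalCore.2 (Subgroup.comap_mono K.normalCore_le))
  obtain ⟨x, rfl⟩ := hπ d
  simpa using hg x

theorem normal_of_le_center {N : Subgroup G} (hN : N ≤ Subgroup.center G) : N.Normal :=
  ⟨fun c hc g ↦ by rwa [Subgroup.mem_center_iff.1 (hN hc) g, mul_inv_cancel_right]⟩

theorem orderOf_quotientMk_of_disjoint {N : Subgroup G} [N.Normal] {g : G}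
    (h : Disjoint (Subgroup.zpowers g) N) : orderOf (g : G ⧸ N) = orderOf g := by
  refine orderOf_eq_orderOf_iff.2 fun k ↦ ?_
  rw [← QuotientGroup.mk_pow, QuotientGroup.eq_one_iff]
  exact ⟨Subgroup.disjoint_def.1 h (Subgroup.npow_mem_zpowers g k), fun hk ↦ hk ▸ N.one_mem⟩

theorem commute_of_quotientMk_mem_zpowers {N : Subgroup G} [N.Normal]
    (hN : N ≤ Subgroup.center G) {g h : G}
    (hgh : (h : G ⧸ N) ∈ Subgroup.zpowers (g : G ⧸ N)) : Commute h g := by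
  obtain ⟨k, hk⟩ := hgh
  have hc : (g ^ k)⁻¹ * h ∈ Subgroup.center G := hN (QuotientGroup.eq.1 (by simpa using hk))
  have hcg : Commute ((g ^ k)⁻¹ * h) g := (Subgroup.mem_center_iff.1 hc g).symm
  simpa using (Commute.zpow_self g k).mul_left hcg

theorem disjoint_zpowers_mul {σ τ : G} (hcomm : Commute σ τ)
    (hdisj : Disjoint (Subgroup.zpowers σ) (Subgroup.zpowers τ))
    (hord : orderOf σ ∣ orderOf τ) :
    Disjoint (Subgroup.zpowers σ) (Subgroup.zpowers (σ * τ)) := by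
  rw [Subgroup.disjoint_def]
  rintro _ ⟨k, rfl⟩ ⟨a, ha⟩
  have hsplit : σ ^ a * τ ^ a = σ ^ k := by simpa [hcomm.mul_zpow] using ha
  have hτa : τ ^ a = 1 := Subgroup.disjoint_def.1 hdisj
    ⟨k - a, by simp [sub_eq_neg_add, zpow_add, ← hsplit]⟩ ⟨a, rfl⟩
  have hσa : σ ^ a = 1 := orderOf_dvd_iff_zpow_eq_one.1
    ((Int.natCast_dvd_natCast.2 hord).trans (orderOf_dvd_iff_zpow_eq_one.2 hτa))
  simpa [hτa, hσa] using hsplit.symm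

theorem mul_mem_center_of_swap {σ τ ρ : G} (hgen : Subgroup.closure {σ, τ, ρ} = ⊤)
    (hcomm : Commute σ τ) (hρ : ρ * ρ = 1) (hconj : SemiconjBy ρ σ τ) :
    σ * τ ∈ Subgroup.center G := by
  have hconj' : SemiconjBy ρ τ σ := by
    simpa [inv_eq_of_mul_eq_one_left hρ] using hconj.inv_symm_left
  have hρ_comm : Commute ρ (σ * τ) := by
    simpa [Commute, hcomm.eq] using hconj.mul_right hconj'
  have hle : Subgroup.closure {σ, τ, ρ} ≤ Subgroup.centralizer {σ * τ} := by
    rw [Subgroup.closure_le]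
    rintro _ (rfl | rfl | rfl) <;> rw [SetLike.mem_coe, Subgroup.mem_centralizer_singleton_iff]
    · exact (Commute.refl _).mul_right hcomm
    · exact hcomm.symm.mul_right (Commute.refl _)
    · exact hρ_comm
  exact Subgroup.mem_center_iff.2 fun g ↦
    Subgroup.mem_centralizer_singleton_iff.1 (hle (hgen ▸ Subgroup.mem_top g))

theorem closure_quotientMk_pair_eq_top {N : Subgroup G} [N.Normal] {a b c : G}
    (hgen : Subgroup.closure {a, b, c} = ⊤) (hb : (b : G ⧸ N) = (a : G ⧸ N)⁻¹) :
    Subgroup.closure {(a : G ⧸ N), (c : G ⧸ N)} = ⊤ := by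
  have himage := congrArg (Subgroup.map (QuotientGroup.mk' N)) hgen
  rw [MonoidHom.map_closure, Subgroup.map_top_of_surjective _ (QuotientGroup.mk'_surjective N)]
    at himage
  rw [eq_top_iff, ← himage, Subgroup.closure_le]
  have ha_mem : (a : G ⧸ N) ∈ Subgroup.closure {(a : G ⧸ N), (c : G ⧸ N)} :=
    Subgroup.subset_closure (Set.mem_insert _ _)
  rintro _ ⟨_, rfl | rfl | rfl, rfl⟩
  · exact ha_mem
  · rw [QuotientGroup.mk'_apply, hb]
    exact inv_mem ha_mem
  · exact Subgroup.subset_closure (Set.mem_insert_of_mem _ rfl)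

theorem closure_pair_eq_comap_zpowers {D : Type*} [Group D] {π : G →* D} {c : G}
    (hker : π.ker = Subgroup.zpowers c) (g : G) :
    Subgroup.closure {c, g} = (Subgroup.zpowers (π g)).comap π := by
  have hle : π.ker ≤ Subgroup.closure {c, g} :=
    hker ▸ Subgroup.zpowers_le.2 (Subgroup.subset_closure (Set.mem_insert _ _))
  have hc : π c = 1 := π.mem_ker.1 (hker ▸ Subgroup.mem_zpowers c)
  rw [← Subgroup.comap_map_eq_self hle, MonoidHom.map_closure, Set.image_pair, hc,
    Subgroup.closure_insert_one, Subgroup.zpowers_eq_closure]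

theorem exists_hom_dihedralGroup_of_swap {n : ℕ} (hn : n ≠ 1) {σ τ ρ : G}
    (hgen : Subgroup.closure {σ, τ, ρ} = ⊤) (hcomm : Commute σ τ) (hσ : orderOf σ = n)
    (hdisj : Disjoint (Subgroup.zpowers σ) (Subgroup.zpowers τ))
    (hρ : ρ * ρ = 1) (hconj : SemiconjBy ρ σ τ) :
    ∃ π : G →* DihedralGroup n, Function.Surjective π ∧
      Subgroup.closure {σ * τ, ρ} = (Subgroup.zpowers (.sr 0)).comap π := by
  set N := Subgroup.zpowers (σ * τ)
  have hN : N ≤ Subgroup.center G :=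
    Subgroup.zpowers_le.2 (mul_mem_center_of_swap hgen hcomm hρ hconj)
  have : N.Normal := normal_of_le_center hN
  have hτ : (τ : G ⧸ N) = (σ : G ⧸ N)⁻¹ :=
    eq_inv_of_mul_eq_one_right ((QuotientGroup.eq_one_iff _).2 (Subgroup.mem_zpowers _))
  have horder : orderOf (σ : G ⧸ N) = n :=
    (orderOf_quotientMk_of_disjoint
      (disjoint_zpowers_mul hcomm hdisj (hconj.orderOf_eq ρ).dvd)).trans hσ
  have hinvolution : (ρ : G ⧸ N) * ρ = 1 := congrArg (QuotientGroup.mk' N) hρ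
  have hinverts : SemiconjBy (ρ : G ⧸ N) σ (σ : G ⧸ N)⁻¹ :=
    hτ ▸ hconj.map (QuotientGroup.mk' N)
  have hreflection : (ρ : G ⧸ N) ∉ Subgroup.zpowers (σ : G ⧸ N) := by
    intro hmem
    have hτσ : τ = σ :=
      mul_right_cancel (hconj.eq.symm.trans (commute_of_quotientMk_mem_zpowers hN hmem).eq)
    have hσ_one : σ = 1 := by simpa [hτσ] using hdisj
    exact hn (by rw [← hσ, hσ_one, orderOf_one])
  obtain ⟨e, he⟩ := exists_mulEquiv_dihedralGroup horder hinvolution hinverts hreflection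
    (closure_quotientMk_pair_eq_top hgen hτ)
  have hker : (e.toMonoidHom.comp (QuotientGroup.mk' N)).ker = N :=
    (MonoidHom.ker_mulEquiv_comp _ e).trans (QuotientGroup.ker_mk' N)
  exact ⟨e.toMonoidHom.comp (QuotientGroup.mk' N),
    e.surjective.comp (QuotientGroup.mk'_surjective N),
    he ▸ closure_pair_eq_comap_zpowers hker ρ⟩

end Group

section Field

variable {F L : Type*} [Field F] [Field L] [Algebra F L]

theorem fixingSubgroup_adjoin (S : Set L) :
    (IntermediateField.adjoin F S).fixingSubgroup = fixingSubgroup Gal(L/F) S := by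
  refine le_antisymm (fun g hg x ↦ hg ⟨x, IntermediateField.subset_adjoin F S x.2⟩) fun g hg ↦ ?_
  have hle : IntermediateField.adjoin F S ≤
      IntermediateField.fixedField (fixingSubgroup Gal(L/F) S) :=
    IntermediateField.adjoin_le_iff.2 fun x hx f ↦ f.2 ⟨x, hx⟩
  exact (IntermediateField.le_iff_le _ _).1 hle hg

theorem rootSet_minpoly_eq_orbit [Normal F L] (z : L) :
    (minpoly F z).rootSet L = MulAction.orbit Gal(L/F) z := by
  ext y
  rw [← isConjRoot_iff_mem_minpoly_rootSet (Normal.isIntegral ‹_› z), IsConjRoot, eq_comm,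
    Normal.minpoly_eq_iff_mem_orbit]

theorem fixingSubgroup_adjoin_simple (z : L) :
    F⟮z⟯.fixingSubgroup = MulAction.stabilizer Gal(L/F) z := by
  rw [fixingSubgroup_adjoin]
  ext g
  simp [mem_fixingSubgroup_iff]

theorem natDegree_minpoly_eq_index_stabilizer [IsGalois F L] (z : L) :
    (minpoly F z).natDegree = (MulAction.stabilizer Gal(L/F) z).index := by
  rw [← fixingSubgroup_adjoin_simple, ← IntermediateField.finrank_eq_fixingSubgroup_index,
    IntermediateField.adjoin.finrank (IsGalois.integral F z)]

theorem normal_stabilizer_of_normal_adjoin_simple (z : L) [Normal F F⟮z⟯] :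
    (MulAction.stabilizer Gal(L/F) z).Normal := by
  rw [← fixingSubgroup_adjoin_simple, ← IntermediateField.restrictNormalHom_ker]
  infer_instance

theorem nonempty_gal_mulEquiv_quotient_normalCore [Normal F L] (z : L) (M : Type*) [Field M]
    [Algebra F M] [(minpoly F z).IsSplittingField F M] :
    Nonempty (Gal(M/F) ≃* Gal(L/F) ⧸ (MulAction.stabilizer Gal(L/F) z).normalCore) := by
  set K := IntermediateField.adjoin F ((minpoly F z).rootSet L)
  have : (minpoly F z).IsSplittingField F K :=
    IntermediateField.adjoin_rootSet_isSplittingField (Normal.splits ‹_› z)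
  have : Normal F K := Normal.of_isSplittingField (minpoly F z)
  have hker : (AlgEquiv.restrictNormalHom (F := F) (K₁ := L) K).ker =
      (MulAction.stabilizer Gal(L/F) z).normalCore := by
    rw [IntermediateField.restrictNormalHom_ker, fixingSubgroup_adjoin, rootSet_minpoly_eq_orbit,
      normalCore_stabilizer]
  let e : M ≃ₐ[F] K := (Polynomial.IsSplittingField.algEquiv M (minpoly F z)).trans
    (Polynomial.IsSplittingField.algEquiv K (minpoly F z)).symm
  exact ⟨(AlgEquiv.autCongr e).trans <|
    (QuotientGroup.quotientKerEquivOfSurjective _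
      (AlgEquiv.restrictNormalHom_surjective L)).symm.trans <|
    QuotientGroup.quotientMulEquivOfEq hker⟩

end Field

theorem stmt17_general {F L : Type*} [Field F] [Field L] [Algebra F L] [IsGalois F L] {n : ℕ}
    (hn : 3 ≤ n) {σ τ ρ : Gal(L/F)} (hgen : Subgroup.closure {σ, τ, ρ} = ⊤)
    (hcomm : σ * τ = τ * σ) (hσ : orderOf σ = n)
    (hint : Subgroup.zpowers σ ⊓ Subgroup.zpowers τ = ⊥) (hρ : orderOf ρ = 2)
    (hconj : ρ * σ * ρ⁻¹ = τ) {z : L}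
    (hstab : ∀ μ : Gal(L/F), μ z = z ↔ μ ∈ Subgroup.closure {σ * τ, ρ})
    (M : Type*) [Field M] [Algebra F M] [(minpoly F z).IsSplittingField F M] :
    (minpoly F z).natDegree = n ∧ ¬ IsGalois F F⟮z⟯ ∧
      Nonempty (Gal(M/F) ≃* DihedralGroup n) := by
  have hρ_sq : ρ * ρ = 1 := by rw [← sq, ← hρ, pow_orderOf_eq_one]
  have hn_two : ¬ n ∣ 2 := fun h ↦ by have := Nat.le_of_dvd two_pos h; omega
  obtain ⟨π, hπ, hcomap⟩ := exists_hom_dihedralGroup_of_swap (by omega) hgen hcomm hσ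
    (disjoint_iff.2 hint) hρ_sq (mul_inv_eq_iff_eq_mul.1 hconj)
  have hstabilizer : MulAction.stabilizer Gal(L/F) z = (Subgroup.zpowers (.sr 0)).comap π :=
    hcomap ▸ Subgroup.ext hstab
  refine ⟨?_, fun hgal ↦ ?_, ?_⟩
  · rw [natDegree_minpoly_eq_index_stabilizer, hstabilizer, Subgroup.index_comap_of_surjective _ hπ,
      index_zpowers_sr]
  · have hnormal := normal_stabilizer_of_normal_adjoin_simple (F := F) z
    rw [hstabilizer] at hnormal
    have := hnormal.map π hπ
    rw [Subgroup.map_comap_eq_self_of_surjective hπ] at this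
    exact not_normal_zpowers_sr hn_two 0 this
  · obtain ⟨e⟩ := nonempty_gal_mulEquiv_quotient_normalCore (F := F) z M
    have hcore : (MulAction.stabilizer Gal(L/F) z).normalCore = π.ker := by
      rw [hstabilizer, normalCore_comap_of_surjective hπ, normalCore_zpowers_sr hn_two,
        MonoidHom.comap_bot]
    exact ⟨e.trans <| (QuotientGroup.quotientMulEquivOfEq hcore).trans <|
      QuotientGroup.quotientKerEquivOfSurjective π hπ⟩

/-- Let `n ≥ 3`, let `L ⊆ ℂ` be a finite Galois extension of `ℚ` with
Galois group `G` of order `2n²` generated by `σ, τ, ρ` as before (`σ, τ` commuting of order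
`n`, `⟨σ⟩ ⊓ ⟨τ⟩` trivial, `ρ` of order `2`, `ρσρ⁻¹ = τ`).  Let `H' = ⟨στ, ρ⟩` and let
`z ∈ L` have stabiliser exactly `H'`.  Then the minimal polynomial `g` of `z` over `ℚ` has
degree `n`, `ℚ(z)/ℚ` is not Galois, and the Galois group of the splitting field of `g`
over `ℚ` (inside `ℂ`) is isomorphic to the dihedral group `Dₙ` of order `2n`. -/
theorem stmt17 (n : ℕ) (hn : 3 ≤ n) (L : IntermediateField ℚ ℂ)
    [FiniteDimensional ℚ L] [IsGalois ℚ L]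
    (hcard : Nat.card (L ≃ₐ[ℚ] L) = 2 * n ^ 2)
    (σ τ ρ : L ≃ₐ[ℚ] L)
    (hgen : Subgroup.closure {σ, τ, ρ} = ⊤)
    (hcomm : σ * τ = τ * σ)
    (hσ : orderOf σ = n) (hτ : orderOf τ = n)
    (hint : Subgroup.zpowers σ ⊓ Subgroup.zpowers τ = ⊥)
    (hρ : orderOf ρ = 2) (hconj : ρ * σ * ρ⁻¹ = τ)
    (z : L)
    (hstab : ∀ μ : L ≃ₐ[ℚ] L, μ z = z ↔ μ ∈ Subgroup.closure {σ * τ, ρ}) :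
    (minpoly ℚ z).natDegree = n ∧
    ¬ IsGalois ℚ (IntermediateField.adjoin ℚ {z} : IntermediateField ℚ L) ∧
    Nonempty
      (((IntermediateField.adjoin ℚ ((minpoly ℚ z).rootSet ℂ) : IntermediateField ℚ ℂ) ≃ₐ[ℚ]
        (IntermediateField.adjoin ℚ ((minpoly ℚ z).rootSet ℂ) : IntermediateField ℚ ℂ)) ≃*
        DihedralGroup n) := by
  have : (minpoly ℚ z).IsSplittingField ℚ
      (IntermediateField.adjoin ℚ ((minpoly ℚ z).rootSet ℂ)) :=
    IntermediateField.adjoin_rootSet_isSplittingField (IsAlgClosed.splits (k := ℂ) _)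
  convert stmt17_general hn hgen hcomm hσ hint hρ hconj hstab
    (IntermediateField.adjoin ℚ ((minpoly ℚ z).rootSet ℂ))
  exact Subsingleton.elim _ _
end
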